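/- arXiv:1704.00749 — 6 statements merged into one kernel-verified Lean document; each statement's English description precedes it below -/
import Mathlib

section
/- Let T be a finite tree on vertex set {0,1,…,N} rooted at vertex 0, with a positive weight x_e > 0 on each edge e. For i ∈ {1,…,N} let P_i be the set of edges on the unique path from vertex 0 to vertex i, let σ_i be the parent of i (the neighbor of i on the path toward 0), and let C_i = {k ∈ {1,…,N} : σ_k = i} be the children of i. Define A ∈ ℝ^{N×N} by A_{ij} = 2 Σ_{e ∈ P_i ∩ P_j} x_e, and define a ∈ ℝ^{N×N} by a_{ii} = (1/2)( x_{{σ_i,i}}^{-1} + Σ_{k ∈ C_i} x_{{i,k}}^{-1} ), a_{ij} = −(1/2) x_{{i,j}}^{-1} if i and j are adjacent in T (i ≠ j, both nonzero vertices), and a_{ij} = 0 otherwise. Then A is a symmetric positive definite matrix and A a = I, i.e., a = A^{-1}. -/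
open Matrix

noncomputable section

/-!
Every edge of the tree is the parent edge `e k = {σ k, k}` of exactly one non-root vertex `k`, so
edges and non-root vertices can be identified. If `B` is the vertex-edge matrix of the paths from
the root and `D` is diagonal with entries `2 x (e k)`, then `A = B D Bᵀ`. The path to `i` is the
path to its parent followed by `e i`; in matrix form, with `S` the child-parent matrix, this reads
`B = S B + 1`, that is `(1 - S) B = 1`. Hence `A⁻¹ = (1 - S)ᵀ D⁻¹ (1 - S)`, and expanding this
product gives `a`. Positive definiteness of `A` is that of `D`.
-/

variable {K V n : Type*} {G : SimpleGraph V} {r : V} {p : ∀ v, G.Walk r v} {ι σ : n → V}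

/-- `G` is a tree with root `r`: `p v` is the path from `r` to `v`, the injection `ι` enumerates the
non-root vertices, and `σ i` is the parent of `ι i`, the last vertex before `ι i` on `p (ι i)`.
Connectedness is implied by the existence of the walks `p`. -/
structure IsRootedTree (p : ∀ v, G.Walk r v) (ι σ : n → V) : Prop where
  isAcyclic : G.IsAcyclic
  isPath : ∀ v, (p v).IsPath
  injective : Function.Injective ι
  range_eq : Set.range ι = {r}ᶜ
  mem_edges : ∀ i, s(σ i, ι i) ∈ (p (ι i)).edges

/-- The edge joining the non-root vertex `ι i` to its parent `σ i`; it makes `n` an index set for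
the edges of the tree as well as for its non-root vertices. -/
def parentEdge (ι σ : n → V) (i : n) : Sym2 V := s(σ i, ι i)

/-- The child-parent matrix, acting on functions on the non-root vertices by evaluation at the
parent, with the value `0` at the root. -/
def parentMatrix (K : Type*) [Zero K] [One K] [DecidableEq V] (ι σ : n → V) : Matrix n n K :=
  of fun i k => if σ i = ι k then 1 else 0

/-- The vertex-edge incidence matrix of the paths from the root, the columns being indexed by the
edges through `parentEdge`. -/
def pathMatrix (K : Type*) [Zero K] [One K] [DecidableEq V] (p : ∀ v, G.Walk r v)
    (ι σ : n → V) : Matrix n n K :=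
  of fun i k => if parentEdge ι σ k ∈ (p (ι i)).edges then 1 else 0

/-- The matrix whose `(i, j)` entry is the total weight of the edges common to the paths from the
root to `ι i` and to `ι j`. -/
def commonPathMatrix [AddCommMonoid K] [DecidableEq V] (p : ∀ v, G.Walk r v) (ι : n → V)
    (y : Sym2 V → K) : Matrix n n K :=
  of fun i j => ∑ e ∈ (p (ι i)).edges.toFinset ∩ (p (ι j)).edges.toFinset, y e

/-- The Laplacian of a rooted tree with edge weights `y`, restricted to the non-root vertices
(Dirichlet condition at the root). The diagonal entry, a sum over all edges at `ι i`, is split into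
the edge to the parent and the edges to the children. -/
def dirichletLaplacian [AddCommGroup K] [DecidableEq V] [Fintype n] [DecidableEq n]
    (G : SimpleGraph V) [DecidableRel G.Adj] (ι σ : n → V) (y : Sym2 V → K) : Matrix n n K :=
  of fun i j =>
    if i = j then y s(σ i, ι i) + ∑ k with σ k = ι i, y s(ι i, ι k)
    else if G.Adj (ι i) (ι j) then -y s(ι i, ι j) else 0

section ParentMatrix

variable [DecidableEq V] [Fintype n] [DecidableEq n]

theorem transpose_parentMatrix_mul_diagonal_mul_self [NonAssocSemiring K]
    (hι : Function.Injective ι) (w : n → K) :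
    (parentMatrix K ι σ)ᵀ * diagonal w * parentMatrix K ι σ =
      diagonal fun i => ∑ k with σ k = ι i, w k := by
  ext i j
  rw [mul_apply]
  simp only [mul_diagonal, transpose_apply, parentMatrix, of_apply, ite_mul, one_mul, zero_mul,
    mul_ite, mul_one, mul_zero, diagonal_apply, Finset.sum_filter]
  split_ifs with hij
  · subst hij
    exact Finset.sum_congr rfl fun k _ => by split_ifs <;> rfl
  · refine Finset.sum_eq_zero fun k _ => ?_
    rw [ite_eq_right_iff]
    exact fun hj => if_neg fun hi => hij (hι (hi.symm.trans hj))

theorem transpose_one_sub_parentMatrix_mul_diagonal_mul_self [Ring K]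
    (hι : Function.Injective ι) (w : n → K) :
    (1 - parentMatrix K ι σ)ᵀ * diagonal w * (1 - parentMatrix K ι σ) =
      diagonal (fun i => w i + ∑ k with σ k = ι i, w k)
        - diagonal w * parentMatrix K ι σ - (parentMatrix K ι σ)ᵀ * diagonal w := by
  rw [← diagonal_add, ← transpose_parentMatrix_mul_diagonal_mul_self hι, transpose_sub,
    transpose_one]
  noncomm_ring

end ParentMatrix

namespace IsRootedTree

theorem adj_parent (hT : IsRootedTree p ι σ) (i : n) : G.Adj (σ i) (ι i) :=
  (p (ι i)).adj_of_mem_edges (hT.mem_edges i)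

theorem path_eq_concat (hT : IsRootedTree p ι σ) (i : n) :
    p (ι i) = (p (σ i)).concat (hT.adj_parent i) :=
  hT.isAcyclic.path_concat (hT.isPath _) (hT.isPath _) (hT.adj_parent i)
    ((p (ι i)).fst_mem_support_of_mem_edges (hT.mem_edges i))

theorem mem_edges_path_iff (hT : IsRootedTree p ι σ) (i : n) (e : Sym2 V) :
    e ∈ (p (ι i)).edges ↔ e ∈ (p (σ i)).edges ∨ e = parentEdge ι σ i := by
  rw [hT.path_eq_concat, SimpleGraph.Walk.edges_concat, List.concat_eq_append, List.mem_append,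
    List.mem_singleton, parentEdge]

theorem parentEdge_notMem_edges_path_parent (hT : IsRootedTree p ι σ) (i : n) :
    parentEdge ι σ i ∉ (p (σ i)).edges := by
  have hpath : ((p (σ i)).concat (hT.adj_parent i)).IsPath :=
    hT.path_eq_concat i ▸ hT.isPath (ι i)
  exact fun he => ((SimpleGraph.Walk.concat_isPath_iff _).mp hpath).2
    ((p (σ i)).snd_mem_support_of_mem_edges he)

theorem ne_root (hT : IsRootedTree p ι σ) (k : n) : ι k ≠ r := by
  rw [← Set.mem_compl_singleton_iff, ← hT.range_eq]
  exact Set.mem_range_self k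

theorem path_root (hT : IsRootedTree p ι σ) : p r = .nil :=
  (SimpleGraph.Walk.isPath_iff_nil.mp (hT.isPath r)).eq_nil

theorem eq_root_or_exists_eq (hT : IsRootedTree p ι σ) (v : V) : v = r ∨ ∃ k, ι k = v := by
  rw [or_iff_not_imp_left, ← Set.mem_range, hT.range_eq]
  exact id

theorem parent_ne_of_parent_eq (hT : IsRootedTree p ι σ) {i j : n} (h : σ i = ι j) :
    σ j ≠ ι i := by
  intro h'
  have hlength (k : n) : (p (ι k)).length = (p (σ k)).length + 1 := by
    rw [hT.path_eq_concat, SimpleGraph.Walk.length_concat]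
  have hi := hlength i
  have hj := hlength j
  rw [h] at hi
  rw [h'] at hj
  lia

theorem parentEdge_injective (hT : IsRootedTree p ι σ) :
    Function.Injective (parentEdge ι σ) := by
  intro i j h
  rcases Sym2.eq_iff.mp h with ⟨-, hι⟩ | ⟨hij, hji⟩
  · exact hT.injective hι
  · exact absurd hji.symm (hT.parent_ne_of_parent_eq hij)

theorem exists_parentEdge_eq_of_mem_support (hT : IsRootedTree p ι σ) {u v : V} (h : G.Adj u v)
    (hu : u ∈ (p v).support) : ∃ k, parentEdge ι σ k = s(u, v) := by
  rcases hT.eq_root_or_exists_eq v with rfl | ⟨k, rfl⟩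
  · rw [hT.path_root, SimpleGraph.Walk.support_nil, List.mem_singleton] at hu
    exact absurd hu h.ne
  · have hparent : σ k = (p (ι k)).penultimate :=
      (hT.isPath _).eq_penultimate_of_mem_edges (Sym2.eq_swap ▸ hT.mem_edges k)
    have hpenultimate : u = (p (ι k)).penultimate :=
      hT.isAcyclic.eq_penultimate_of_adj_end (hT.isPath _) h.symm hu
    exact ⟨k, by rw [parentEdge, hparent, hpenultimate]⟩

theorem exists_parentEdge_eq (hT : IsRootedTree p ι σ) {e : Sym2 V} (he : e ∈ G.edgeSet) :
    ∃ k, parentEdge ι σ k = e := by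
  induction e with | _ u v => ?_
  have huv : G.Adj u v := he
  by_cases hu : u ∈ (p v).support
  · exact hT.exists_parentEdge_eq_of_mem_support huv hu
  · have hv : v ∈ (p u).support :=
      hT.isAcyclic.mem_support_of_ne_mem_support_of_adj_of_isPath (hT.isPath u) (hT.isPath v) huv hu
    rw [Sym2.eq_swap]
    exact hT.exists_parentEdge_eq_of_mem_support huv.symm hv

theorem adj_iff (hT : IsRootedTree p ι σ) {i j : n} :
    G.Adj (ι i) (ι j) ↔ σ i = ι j ∨ σ j = ι i := by
  constructor
  · intro h
    obtain ⟨k, hk⟩ := hT.exists_parentEdge_eq (G.mem_edgeSet.mpr h)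
    rcases Sym2.eq_iff.mp hk with ⟨hσ, hι⟩ | ⟨hσ, hι⟩
    · exact .inr (hT.injective hι ▸ hσ)
    · exact .inl (hT.injective hι ▸ hσ)
  · rintro (h | h)
    · exact h ▸ (hT.adj_parent i).symm
    · exact h ▸ hT.adj_parent j

section Matrices

variable [DecidableEq V] [Fintype n]

theorem parentMatrix_mul_pathMatrix_apply [NonAssocSemiring K] (hT : IsRootedTree p ι σ)
    (i k : n) :
    (parentMatrix K ι σ * pathMatrix K p ι σ) i k =
      if parentEdge ι σ k ∈ (p (σ i)).edges then 1 else 0 := by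
  rcases hT.eq_root_or_exists_eq (σ i) with hroot | ⟨j, hj⟩
  · have hedges : (p (σ i)).edges = [] := by rw [hroot, hT.path_root, SimpleGraph.Walk.edges_nil]
    simp [mul_apply, parentMatrix, hroot, hedges, (hT.ne_root _).symm]
  · have hzero (m : n) (hm : m ≠ j) : parentMatrix K ι σ i m * pathMatrix K p ι σ m k = 0 := by
      simp [parentMatrix, ← hj, hT.injective.eq_iff, hm.symm]
    rw [mul_apply, Fintype.sum_eq_single j hzero, ← hj]
    simp [parentMatrix, pathMatrix, hj]

variable [DecidableEq n]

theorem one_sub_parentMatrix_mul_pathMatrix [Ring K] (hT : IsRootedTree p ι σ) :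
    (1 - parentMatrix K ι σ) * pathMatrix K p ι σ = 1 := by
  ext i k
  rw [sub_mul, one_mul, Matrix.sub_apply, hT.parentMatrix_mul_pathMatrix_apply, pathMatrix,
    of_apply, one_apply]
  simp only [hT.mem_edges_path_iff, hT.parentEdge_injective.eq_iff]
  by_cases hik : i = k
  · subst hik
    simp [hT.parentEdge_notMem_edges_path_parent]
  · simp [hik, Ne.symm hik]

theorem pathMatrix_mul_diagonal_mul_transpose [NonAssocSemiring K] (hT : IsRootedTree p ι σ)
    (y : Sym2 V → K) :
    pathMatrix K p ι σ * diagonal (fun k => y (parentEdge ι σ k)) * (pathMatrix K p ι σ)ᵀ =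
      commonPathMatrix p ι y := by
  ext i j
  set E := (p (ι i)).edges.toFinset ∩ (p (ι j)).edges.toFinset with hE
  have hrange : ∀ e ∈ E, e ∉ Set.range (parentEdge ι σ) → y e = 0 := fun e he hnot =>
    absurd (hT.exists_parentEdge_eq ((p (ι i)).edges_subset_edgeSet
      (List.mem_toFinset.mp (Finset.mem_inter.mp he).1))) hnot
  have hpreimage : E.preimage (parentEdge ι σ) hT.parentEdge_injective.injOn =
      Finset.univ.filter fun k => parentEdge ι σ k ∈ E := by
    ext k
    simp only [Finset.mem_preimage, Finset.mem_filter_univ]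
  rw [commonPathMatrix, of_apply, ← Finset.sum_preimage _ _ hT.parentEdge_injective.injOn y hrange,
    hpreimage, Finset.sum_filter, mul_apply]
  refine Finset.sum_congr rfl fun k _ => ?_
  simp only [mul_diagonal, transpose_apply, pathMatrix, of_apply, hE, Finset.mem_inter,
    List.mem_toFinset, ite_mul, mul_ite, one_mul, mul_one, zero_mul, mul_zero, ← ite_and, and_comm]

theorem transpose_mul_diagonal_mul_eq_dirichletLaplacian [Ring K] [DecidableRel G.Adj]
    (hT : IsRootedTree p ι σ) (y : Sym2 V → K) :
    (1 - parentMatrix K ι σ)ᵀ * diagonal (fun k => y (parentEdge ι σ k))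
        * (1 - parentMatrix K ι σ) = dirichletLaplacian G ι σ y := by
  ext i j
  rw [transpose_one_sub_parentMatrix_mul_diagonal_mul_self hT.injective]
  simp only [dirichletLaplacian, parentEdge, Matrix.sub_apply, diagonal_apply, diagonal_mul,
    mul_diagonal, transpose_apply, parentMatrix, of_apply, hT.adj_iff, mul_ite, ite_mul, mul_one,
    one_mul, mul_zero, zero_mul]
  by_cases hij : i = j
  · subst hij
    have hchildren : ∑ k with σ k = ι i, y s(σ k, ι k) = ∑ k with σ k = ι i, y s(ι i, ι k) :=
      Finset.sum_congr rfl fun k hk => by rw [(Finset.mem_filter_univ k).mp hk]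
    simp [hchildren, (hT.adj_parent i).ne]
  · rw [if_neg hij, if_neg hij]
    by_cases hi : σ i = ι j
    · simp [hi, hT.parent_ne_of_parent_eq hi, Sym2.eq_swap]
    · by_cases hj : σ j = ι i <;> simp [hi, hj]

theorem commonPathMatrix_mul_dirichletLaplacian [Field K] [DecidableRel G.Adj]
    (hT : IsRootedTree p ι σ) {y : Sym2 V → K} (hy : ∀ e ∈ G.edgeSet, y e ≠ 0) :
    commonPathMatrix p ι y * dirichletLaplacian G ι σ (fun e => (y e)⁻¹) = 1 := by
  rw [← hT.pathMatrix_mul_diagonal_mul_transpose,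
    ← hT.transpose_mul_diagonal_mul_eq_dirichletLaplacian]
  set B := pathMatrix K p ι σ
  set C := 1 - parentMatrix K ι σ
  set D := diagonal fun k => y (parentEdge ι σ k)
  set D' := diagonal fun k => (y (parentEdge ι σ k))⁻¹
  have hCB : C * B = 1 := hT.one_sub_parentMatrix_mul_pathMatrix
  have hDD' : D * D' = 1 := by
    rw [diagonal_mul_diagonal, ← diagonal_one]
    exact congrArg diagonal (funext fun k => mul_inv_cancel₀ (hy _ (hT.adj_parent k)))
  calc
    B * D * Bᵀ * (Cᵀ * D' * C) = B * (D * (C * B)ᵀ * D') * C := by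
      simp only [transpose_mul, Matrix.mul_assoc]
    _ = 1 := by rw [hCB, transpose_one, Matrix.mul_one, hDD', Matrix.mul_one, mul_eq_one_comm, hCB]

end Matrices

theorem posDef_commonPathMatrix [DecidableEq V] [Finite n] [CommRing K] [NoZeroDivisors K]
    [PartialOrder K] [StarRing K] [StarOrderedRing K] (hT : IsRootedTree p ι σ) {y : Sym2 V → K}
    (hy : ∀ e ∈ G.edgeSet, 0 < y e) : (commonPathMatrix p ι y).PosDef := by
  classical
  have := Fintype.ofFinite n
  have hstar : (pathMatrix K p ι σ)ᴴ = (pathMatrix K p ι σ)ᵀ := by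
    ext i k
    simp [pathMatrix, apply_ite star]
  have hunit : IsUnit (pathMatrix K p ι σ) :=
    .of_mul_eq_one_right _ hT.one_sub_parentMatrix_mul_pathMatrix
  rw [← hT.pathMatrix_mul_diagonal_mul_transpose, ← hstar]
  exact (PosDef.diagonal fun k => hy _ (hT.adj_parent k)).mul_mul_conjTranspose_same
    (vecMul_injective_of_isUnit hunit)

end IsRootedTree

theorem stmt_0_general [DecidableEq V] [Fintype n] [DecidableEq n] [DecidableRel G.Adj]
    [Field K] [PartialOrder K] [StarRing K] [StarOrderedRing K]
    (hT : IsRootedTree p ι σ) {x : Sym2 V → K} (hx : ∀ e ∈ G.edgeSet, 0 < x e)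
    {A a : Matrix n n K}
    (hA : ∀ i j, A i j = 2 * ∑ e ∈ (p (ι i)).edges.toFinset ∩ (p (ι j)).edges.toFinset, x e)
    (ha : ∀ i j, a i j =
      if i = j then (1 / 2) * ((x s(σ i, ι i))⁻¹ + ∑ k with σ k = ι i, (x s(ι i, ι k))⁻¹)
      else if G.Adj (ι i) (ι j) then -(1 / 2) * (x s(ι i, ι j))⁻¹ else 0) :
    A.PosDef ∧ A * a = 1 ∧ a = A⁻¹ := by
  have hy : ∀ e ∈ G.edgeSet, 0 < 2 * x e := fun e he => by
    rw [two_mul]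
    exact add_pos (hx e he) (hx e he)
  have hA' : A = commonPathMatrix p ι fun e => 2 * x e := by
    ext i j
    rw [hA, commonPathMatrix, of_apply, Finset.mul_sum]
  have ha' : a = dirichletLaplacian G ι σ fun e => (2 * x e)⁻¹ := by
    ext i j
    simp only [ha, dirichletLaplacian, of_apply, mul_inv, Finset.mul_sum, mul_add, one_div, neg_mul]
  have hAa : A * a = 1 := by
    rw [hA', ha']
    exact hT.commonPathMatrix_mul_dirichletLaplacian fun e he => (hy e he).ne'
  exact ⟨hA' ▸ hT.posDef_commonPathMatrix hy, hAa, (inv_eq_right_inv hAa).symm⟩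

/-- Let T be a finite tree on vertices {0,…,N} rooted at 0 with positive edge weights x.
For i ∈ {1,…,N} (encoded as `i.succ : Fin (N+1)` for `i : Fin N`), let `p i.succ` be the
unique path from 0 to i, `σ i` the parent of i (the neighbor of i on the path toward 0),
and the children of i the vertices k with σ k = i.  With
A i j = 2 Σ_{e ∈ P_i ∩ P_j} x e and a the claimed inverse (a_{ii} = (1/2)(x_{σ_i i}⁻¹ +
Σ_{k child of i} x_{ik}⁻¹), a_{ij} = −(1/2) x_{ij}⁻¹ for adjacent i ≠ j, 0 otherwise),
A is symmetric positive definite and A a = I, i.e. a = A⁻¹. -/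
theorem stmt_0 (N : ℕ) (hN : 0 < N)
    (G : SimpleGraph (Fin (N + 1))) [DecidableRel G.Adj] (hG : G.IsTree)
    (x : Sym2 (Fin (N + 1)) → ℝ) (hx : ∀ e ∈ G.edgeSet, 0 < x e)
    (p : ∀ i : Fin (N + 1), G.Walk 0 i) (hp : ∀ i, (p i).IsPath)
    (σ : Fin N → Fin (N + 1))
    (hσ : ∀ i : Fin N, G.Adj (σ i) i.succ ∧ s(σ i, i.succ) ∈ (p i.succ).edges)
    (A a : Matrix (Fin N) (Fin N) ℝ)
    (hAdef : ∀ i j : Fin N,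
      A i j = 2 * ∑ e ∈ (p i.succ).edges.toFinset ∩ (p j.succ).edges.toFinset, x e)
    (hadef : ∀ i j : Fin N,
      a i j =
        if i = j then
          (1 / 2) * ((x s(σ i, i.succ))⁻¹
            + ∑ k ∈ Finset.univ.filter fun k : Fin N => σ k = i.succ,
                (x s(i.succ, k.succ))⁻¹)
        else if G.Adj i.succ j.succ then -(1 / 2) * (x s(i.succ, j.succ))⁻¹
        else 0) :
    A.PosDef ∧ A * a = 1 ∧ a = A⁻¹ :=
  stmt_0_general ⟨hG.isAcyclic, hp, Fin.succ_injective N, Fin.range_succ N, fun i => (hσ i).2⟩ hx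
    hAdef hadef

end
end

section
/- The gradient of the dual function is the affine map ∇D(z) = M z + r, where M is the 4N×4N block matrix M = [[−A, A, −I, I], [A, −A, I, −I], [−I, I, −A^{-1}, A^{-1}], [I, −I, A^{-1}, −A^{-1}]] and r = (v^min − d, d − v^max, q^min, −q^max). Consequently, ∇D is Lipschitz continuous with Lipschitz constant L = max_{i=1,…,N} 2(λ_i(A) + 1/λ_i(A)). -/
open Matrix

noncomputable section

/-- Euclidean norm of a vector in ℝ^{4N}, represented as four blocks of ℝ^N. -/
def enorm4 {N : ℕ} (w : Fin 4 → Fin N → ℝ) : ℝ :=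
  Real.sqrt (∑ b, ∑ i, w b i ^ 2)

/-- The (linearized) voltage map v(q) = A q + d. -/
def volt {N : ℕ} (A : Matrix (Fin N) (Fin N) ℝ) (d : Fin N → ℝ) (q : Fin N → ℝ) :
    Fin N → ℝ :=
  A *ᵥ q + d

/-- q(z) = λ^min − λ^max + A⁻¹(μ^min − μ^max). -/
def qOf {N : ℕ} (A : Matrix (Fin N) (Fin N) ℝ) (z : Fin 4 → Fin N → ℝ) : Fin N → ℝ :=
  z 0 - z 1 + A⁻¹ *ᵥ (z 2 - z 3)

/-- ∇D(z) = (v^min − v(q(z)), v(q(z)) − v^max, q^min − q(z), q(z) − q^max). -/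
def gradD {N : ℕ} (A : Matrix (Fin N) (Fin N) ℝ) (d vmin vmax qmin qmax : Fin N → ℝ)
    (z : Fin 4 → Fin N → ℝ) : Fin 4 → Fin N → ℝ :=
  ![vmin - volt A d (qOf A z), volt A d (qOf A z) - vmax,
    qmin - qOf A z, qOf A z - qmax]

/-- Identify the four-block representation of ℝ^{4N} with functions on
(Fin N ⊕ Fin N) ⊕ (Fin N ⊕ Fin N). -/
def flatten4 {N : ℕ} (z : Fin 4 → Fin N → ℝ) : (Fin N ⊕ Fin N) ⊕ (Fin N ⊕ Fin N) → ℝ :=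
  Sum.elim (Sum.elim (z 0) (z 1)) (Sum.elim (z 2) (z 3))

/-- The 4N×4N block matrix
M = [[−A, A, −I, I], [A, −A, I, −I], [−I, I, −A⁻¹, A⁻¹], [I, −I, A⁻¹, −A⁻¹]]. -/
def Mblock {N : ℕ} (A : Matrix (Fin N) (Fin N) ℝ) :
    Matrix ((Fin N ⊕ Fin N) ⊕ (Fin N ⊕ Fin N)) ((Fin N ⊕ Fin N) ⊕ (Fin N ⊕ Fin N)) ℝ :=
  fromBlocks (fromBlocks (-A) A A (-A)) (fromBlocks (-1) 1 1 (-1))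
    (fromBlocks (-1) 1 1 (-1)) (fromBlocks (-A⁻¹) (A⁻¹) (A⁻¹) (-A⁻¹))

/-
`∇D(z) = C q(z) + r` for the Jacobian `C` of the constraints, and `q(z) = W z` is linear, so
`M = C W`, while the product in the other order collapses to the small matrix
`W C = -2(A + A⁻¹)`. As `M` is symmetric, its norm is attained at an eigenvalue, and the nonzero
eigenvalues of `C W` are eigenvalues of `W C`; hence `‖M‖ ≤ 2‖A + A⁻¹‖`, which the spectral theorem
for `A` turns into the stated constant.
-/

open WithLp
open scoped Matrix.Norms.L2Operator

section OperatorNorm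

variable {𝕜 m n : Type*} [RCLike 𝕜] [Fintype m] [DecidableEq m] [Fintype n] [DecidableEq n]

lemma l2_opNorm_cfc_le_of_eigenvalues {A : Matrix n n 𝕜} (hA : A.IsHermitian) {f : ℝ → ℝ} {c : ℝ}
    (hc : 0 ≤ c) (hf : ∀ i, |f (hA.eigenvalues i)| ≤ c) : ‖cfc f A‖ ≤ c := by
  rw [hA.cfc_eq, IsHermitian.cfc, Unitary.conjStarAlgAut_apply, ← Unitary.coe_star,
    CStarRing.norm_mul_coe_unitary, CStarRing.norm_coe_unitary_mul, l2_opNorm_diagonal,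
    pi_norm_le_iff_of_nonneg hc]
  simpa only [Function.comp_apply, RCLike.norm_ofReal] using hf

lemma l2_opNorm_le_of_eigenvalues {A : Matrix n n 𝕜} (hA : A.IsHermitian) {c : ℝ}
    (hc : 0 ≤ c) (h : ∀ i, |hA.eigenvalues i| ≤ c) : ‖A‖ ≤ c := by
  have hid : cfc (id : ℝ → ℝ) A = A := cfc_id ℝ A hA.isSelfAdjoint
  exact hid ▸ l2_opNorm_cfc_le_of_eigenvalues hA hc h

lemma l2_opNorm_add_inv_le_of_eigenvalues {A : Matrix n n 𝕜} (hA : A.IsHermitian)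
    (hunit : IsUnit A) {c : ℝ} (hc : 0 ≤ c)
    (h : ∀ i, |hA.eigenvalues i + (hA.eigenvalues i)⁻¹| ≤ c) : ‖A + A⁻¹‖ ≤ c := by
  have hcont (f : ℝ → ℝ) : ContinuousOn f (spectrum ℝ A) := A.finite_real_spectrum.continuousOn f
  have hcfc : cfc (fun x : ℝ => x + x⁻¹) A = A + A⁻¹ := by
    rw [cfc_add (a := A) (fun x : ℝ => x) (fun x : ℝ => x⁻¹) (hf := hcont _) (hg := hcont _),
      cfc_id' ℝ A hA.isSelfAdjoint, cfc_ringInverse_id A hunit hA.isSelfAdjoint,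
      nonsing_inv_eq_ringInverse]
  exact hcfc ▸ l2_opNorm_cfc_le_of_eigenvalues hA hc h

lemma norm_le_l2_opNorm_of_mulVec_eq_smul {A : Matrix n n 𝕜} {v : n → 𝕜} {a : 𝕜} (hv : v ≠ 0)
    (hA : A *ᵥ v = a • v) : ‖a‖ ≤ ‖A‖ := by
  have hpos : 0 < ‖toLp 2 v‖ := norm_pos_iff.mpr ((toLp_eq_zero 2).not.mpr hv)
  refine le_of_mul_le_mul_right ?_ hpos
  calc ‖a‖ * ‖toLp 2 v‖ = ‖toLp 2 (A *ᵥ v)‖ := by rw [hA, toLp_smul, norm_smul]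
    _ ≤ ‖A‖ * ‖toLp 2 v‖ := l2_opNorm_mulVec A (toLp 2 v)

lemma l2_opNorm_mul_le_l2_opNorm_mul_comm {X : Matrix m n 𝕜} {Y : Matrix n m 𝕜}
    (hXY : (X * Y).IsHermitian) : ‖X * Y‖ ≤ ‖Y * X‖ := by
  refine l2_opNorm_le_of_eigenvalues hXY (norm_nonneg _) fun i => ?_
  set a := hXY.eigenvalues i
  set v : m → 𝕜 := (hXY.eigenvectorBasis i).ofLp
  have hv : v ≠ 0 := (ofLp_eq_zero 2).not.mpr (hXY.eigenvectorBasis.orthonormal.ne_zero i)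
  have heig : X *ᵥ (Y *ᵥ v) = (a : 𝕜) • v := by
    rw [mulVec_mulVec, hXY.mulVec_eigenvectorBasis i, RCLike.real_smul_eq_coe_smul (K := 𝕜)]
  rcases eq_or_ne a 0 with ha | ha
  · simp [ha]
  have hYv : Y *ᵥ v ≠ 0 := by
    intro h0
    rw [h0, mulVec_zero] at heig
    exact smul_ne_zero (RCLike.ofReal_ne_zero.mpr ha) hv heig.symm
  have hYX : (Y * X) *ᵥ (Y *ᵥ v) = (a : 𝕜) • (Y *ᵥ v) := by
    rw [← mulVec_mulVec, heig, mulVec_smul]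
  simpa using norm_le_l2_opNorm_of_mulVec_eq_smul hYv hYX

end OperatorNorm

section Factorization

variable {R n : Type*} [CommRing R] [Fintype n] [DecidableEq n]

/-- The Jacobian `C` of the constraint map
`q ↦ (v^min − v(q), v(q) − v^max, q^min − q, q − q^max)`. -/
def constraintJacobian (A : Matrix n n R) : Matrix ((n ⊕ n) ⊕ (n ⊕ n)) n R :=
  fromRows (fromRows (-A) A) (fromRows (-1) 1)

/-- The matrix `W` of the linear map `z ↦ q(z)` sending dual variables to the minimizer of the
Lagrangian. -/
def minimizerMatrix (A : Matrix n n R) : Matrix n ((n ⊕ n) ⊕ (n ⊕ n)) R :=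
  fromCols (fromCols 1 (-1)) (fromCols A⁻¹ (-A⁻¹))

lemma minimizerMatrix_mul_constraintJacobian (A : Matrix n n R) :
    minimizerMatrix A * constraintJacobian A = -(2 : R) • (A + A⁻¹) := by
  simp only [minimizerMatrix, constraintJacobian, fromCols_mul_fromRows, one_mul, mul_one,
    neg_mul, mul_neg]
  module

end Factorization

section DualGradient

variable {N : ℕ} {A : Matrix (Fin N) (Fin N) ℝ}

lemma constraintJacobian_mul_minimizerMatrix (hdet : IsUnit A.det) :
    constraintJacobian A * minimizerMatrix A = Mblock A := by
  simp only [constraintJacobian, minimizerMatrix, Mblock, fromRows_mul_fromCols,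
    mul_nonsing_inv A hdet, neg_mul, mul_neg, one_mul, mul_one, neg_neg]

lemma isHermitian_Mblock (hA : A.IsHermitian) : (Mblock A).IsHermitian := by
  have hblock {B : Matrix (Fin N) (Fin N) ℝ} (h : B.IsHermitian) :
      (fromBlocks (-B) B B (-B)).IsHermitian := h.neg.fromBlocks h.eq h.neg
  exact (hblock hA).fromBlocks (hblock isHermitian_one).eq (hblock hA.inv)

lemma l2_opNorm_Mblock_le (hA : A.IsHermitian) (hdet : IsUnit A.det) :
    ‖Mblock A‖ ≤ 2 * ‖A + A⁻¹‖ := by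
  have hfac := constraintJacobian_mul_minimizerMatrix hdet
  calc ‖Mblock A‖ = ‖constraintJacobian A * minimizerMatrix A‖ := by rw [hfac]
    _ ≤ ‖minimizerMatrix A * constraintJacobian A‖ :=
        l2_opNorm_mul_le_l2_opNorm_mul_comm (hfac ▸ isHermitian_Mblock hA)
    _ = 2 * ‖A + A⁻¹‖ := by
        rw [minimizerMatrix_mul_constraintJacobian, norm_smul, norm_neg, Real.norm_two]

lemma minimizerMatrix_mulVec_flatten4 (A : Matrix (Fin N) (Fin N) ℝ) (z : Fin 4 → Fin N → ℝ) :
    minimizerMatrix A *ᵥ flatten4 z = qOf A z := by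
  simp only [minimizerMatrix, flatten4, qOf, fromCols_mulVec_sumElim, one_mulVec, neg_mulVec,
    mulVec_add, mulVec_neg, sub_eq_add_neg]

lemma flatten4_gradD_eq_constraintJacobian_mulVec (A : Matrix (Fin N) (Fin N) ℝ)
    (d vmin vmax qmin qmax : Fin N → ℝ) (z : Fin 4 → Fin N → ℝ) :
    flatten4 (gradD A d vmin vmax qmin qmax z)
      = constraintJacobian A *ᵥ qOf A z
        + Sum.elim (Sum.elim (vmin - d) (d - vmax)) (Sum.elim qmin (-qmax)) := by
  ext ((i | i) | (i | i)) <;>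
    simp only [flatten4, gradD, volt, constraintJacobian, fromRows_mulVec, neg_mulVec,
      one_mulVec, Sum.elim_inl, Sum.elim_inr, Pi.add_apply, Pi.sub_apply, Pi.neg_apply,
      cons_val] <;>
    ring

lemma flatten4_gradD (hdet : IsUnit A.det) (d vmin vmax qmin qmax : Fin N → ℝ)
    (z : Fin 4 → Fin N → ℝ) :
    flatten4 (gradD A d vmin vmax qmin qmax z)
      = Mblock A *ᵥ flatten4 z
        + Sum.elim (Sum.elim (vmin - d) (d - vmax)) (Sum.elim qmin (-qmax)) := by
  rw [flatten4_gradD_eq_constraintJacobian_mulVec, ← minimizerMatrix_mulVec_flatten4,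
    mulVec_mulVec, constraintJacobian_mul_minimizerMatrix hdet]

lemma flatten4_sub (z w : Fin 4 → Fin N → ℝ) : flatten4 (z - w) = flatten4 z - flatten4 w := by
  ext ((i | i) | (i | i)) <;> rfl

lemma norm_toLp_flatten4 (z : Fin 4 → Fin N → ℝ) : ‖toLp 2 (flatten4 z)‖ = enorm4 z := by
  simp [EuclideanSpace.norm_eq, enorm4, flatten4, Fin.sum_univ_four, add_assoc]

lemma enorm4_gradD_sub_le (hdet : IsUnit A.det) (d vmin vmax qmin qmax : Fin N → ℝ)
    (z w : Fin 4 → Fin N → ℝ) :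
    enorm4 (gradD A d vmin vmax qmin qmax z - gradD A d vmin vmax qmin qmax w)
      ≤ ‖Mblock A‖ * enorm4 (z - w) := by
  rw [← norm_toLp_flatten4, ← norm_toLp_flatten4, flatten4_sub, flatten4_gradD hdet,
    flatten4_gradD hdet, add_sub_add_right_eq_sub, ← mulVec_sub, ← flatten4_sub]
  exact l2_opNorm_mulVec (Mblock A) (toLp 2 (flatten4 (z - w)))

end DualGradient

theorem stmt_1_general {N : ℕ} {A : Matrix (Fin N) (Fin N) ℝ} (hA : A.IsHermitian)
    (hdet : IsUnit A.det) (d vmin vmax qmin qmax : Fin N → ℝ) {L : ℝ}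
    (hL : IsGreatest
      (Set.range fun i : Fin N => 2 * |hA.eigenvalues i + (hA.eigenvalues i)⁻¹|) L) :
    (∀ z : Fin 4 → Fin N → ℝ,
      flatten4 (gradD A d vmin vmax qmin qmax z)
        = Mblock A *ᵥ flatten4 z
          + Sum.elim (Sum.elim (vmin - d) (d - vmax)) (Sum.elim qmin (-qmax))) ∧
    (∀ z w : Fin 4 → Fin N → ℝ,
      enorm4 (fun b i => gradD A d vmin vmax qmin qmax z b i
          - gradD A d vmin vmax qmin qmax w b i)
        ≤ L * enorm4 (fun b i => z b i - w b i)) := by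
  refine ⟨flatten4_gradD hdet d vmin vmax qmin qmax, fun z w => ?_⟩
  obtain ⟨⟨i, hi⟩, hbound⟩ := hL
  have hL₀ : 0 ≤ L := hi ▸ by positivity
  have hspec : ‖A + A⁻¹‖ ≤ L / 2 :=
    l2_opNorm_add_inv_le_of_eigenvalues hA ((isUnit_iff_isUnit_det A).mpr hdet)
      (by positivity) fun j => by linarith [hbound (Set.mem_range_self j)]
  have hM : ‖Mblock A‖ ≤ L := by linarith [l2_opNorm_Mblock_le hA hdet]
  exact (enorm4_gradD_sub_le hdet d vmin vmax qmin qmax z w).trans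
    (mul_le_mul_of_nonneg_right hM (Real.sqrt_nonneg _))

/-- The gradient of the dual function is the affine map ∇D(z) = M z + r with
r = (v^min − d, d − v^max, q^min, −q^max); consequently ∇D is Lipschitz continuous
with constant L = max_i 2(λ_i(A) + 1/λ_i(A)). -/
theorem stmt_1 (N : ℕ) (hN : 0 < N) (A : Matrix (Fin N) (Fin N) ℝ) (hA : A.PosDef)
    (d vmin vmax qmin qmax : Fin N → ℝ)
    (hv : ∀ i, vmin i ≤ vmax i) (hq : ∀ i, qmin i ≤ qmax i)
    (L : ℝ)
    (hL : IsGreatest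
      (Set.range fun i : Fin N => 2 * (hA.1.eigenvalues i + (hA.1.eigenvalues i)⁻¹)) L) :
    (∀ z : Fin 4 → Fin N → ℝ,
      flatten4 (gradD A d vmin vmax qmin qmax z)
        = Mblock A *ᵥ flatten4 z
          + Sum.elim (Sum.elim (vmin - d) (d - vmax)) (Sum.elim qmin (-qmax))) ∧
    (∀ z w : Fin 4 → Fin N → ℝ,
      enorm4 (fun b i => gradD A d vmin vmax qmin qmax z b i
          - gradD A d vmin vmax qmin qmax w b i)
        ≤ L * enorm4 (fun b i => z b i - w b i)) := by
  have habs (i : Fin N) : |hA.1.eigenvalues i + (hA.1.eigenvalues i)⁻¹|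
      = hA.1.eigenvalues i + (hA.1.eigenvalues i)⁻¹ :=
    abs_of_pos (add_pos (hA.eigenvalues_pos i) (inv_pos.mpr (hA.eigenvalues_pos i)))
  exact stmt_1_general hA.1 hA.det_pos.ne'.isUnit d vmin vmax qmin qmax
    (by simpa only [habs] using hL)

end
end

section
/- Let A ∈ ℝ^{N×N} be symmetric positive definite with eigenvalues λ_1(A),…,λ_N(A), and define the 4N×4N block matrix M = [[−A, A, −I, I], [A, −A, I, −I], [−I, I, −A^{-1}, A^{-1}], [I, −I, A^{-1}, −A^{-1}]]. Then: (i) if A w = λ w with w ≠ 0, the vector v = (λ w, −λ w, w, −w) satisfies M v = −2(λ + 1/λ) v; (ii) M has rank N, so 0 is an eigenvalue of M with multiplicity 3N; hence the eigenvalues of M are −2(λ_i(A) + 1/λ_i(A)) for i = 1,…,N together with 0 with multiplicity 3N. -/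
open Matrix Polynomial

noncomputable section

/-!
`M = P * Q` with `P = [A; -A; 1; -1]` of width `N` and `Q = [-1, 1, -A⁻¹, A⁻¹]` of height `N`, while
`Q * P = -2 • (A + A⁻¹)`. An identity block makes `P` left invertible and `Q` right invertible, so
`M` has rank `N`. Up to a power of `X`, `P * Q` and `Q * P` have the same characteristic
polynomial, and `P` carries eigenvectors of `Q * P` to eigenvectors of `P * Q`.

The eigenvalues of the rational function `p(A) q(A)⁻¹` are those of `A` transformed by `p / q`: if
`A` has eigenvalues `μᵢ`, then `det r(A) = ∏ r(μᵢ)` for every polynomial `r`, because both sides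
are multiplicative in `r`, which splits over an algebraic closure.
-/

theorem rank_mul_eq_card_of_mul_eq_one {m n p R : Type*} [Fintype m] [Fintype n] [DecidableEq n]
    [Fintype p] [CommRing R] [Nontrivial R] {P : Matrix m n R} {Q : Matrix n p R}
    {L : Matrix n m R} {S : Matrix p n R} (hL : L * P = 1) (hS : Q * S = 1) :
    (P * Q).rank = Fintype.card n := by
  apply le_antisymm ((rank_mul_le_left P Q).trans (rank_le_card_width P))
  have h : L * (P * Q) * S = 1 := by
    rw [← Matrix.mul_assoc L, hL, Matrix.one_mul, hS]
  calc Fintype.card n = (L * (P * Q) * S).rank := by rw [h, rank_one]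
    _ ≤ (P * Q).rank := (rank_mul_le_left _ S).trans (rank_mul_le_right L _)

section SpectralMapping

variable {n : Type*} [Fintype n] [DecidableEq n]

section CommRing

variable {R : Type*} [CommRing R] {A : Matrix n n R} {μ : n → R}

theorem det_add_algebraMap_eq_prod (h : A.charpoly = ∏ i, (X - C (μ i))) (c : R) :
    (A + algebraMap R (Matrix n n R) c).det = ∏ i, (μ i + c) := by
  have hneg : A + algebraMap R (Matrix n n R) c = -(scalar n (-c) - A) := by
    rw [map_neg, neg_sub, sub_neg_eq_add]
    rfl
  rw [hneg, det_neg, ← eval_charpoly, h, eval_prod, Fintype.card, ← Finset.prod_const,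
    ← Finset.prod_mul_distrib]
  exact Finset.prod_congr rfl fun i _ => by simp

theorem det_aeval_eq_prod_of_splits (h : A.charpoly = ∏ i, (X - C (μ i))) {p : R[X]}
    (hp : p.Splits) : (aeval A p).det = ∏ i, p.eval (μ i) := by
  induction hp using Submonoid.closure_induction with
  | mem q hq =>
    obtain ⟨c, rfl⟩ | ⟨c, rfl⟩ := hq
    · simp [algebraMap_eq_diagonal]
    · simpa using det_add_algebraMap_eq_prod h c
  | one => simp
  | mul q r _ _ hq hr => simp only [map_mul, det_mul, hq, hr, eval_mul, Finset.prod_mul_distrib]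

theorem aeval_map_mapMatrix {S : Type*} [CommRing S] (f : R →+* S) (A : Matrix n n R) (p : R[X]) :
    aeval (f.mapMatrix A) (p.map f) = f.mapMatrix (aeval A p) :=
  .symm <| map_aeval_eq_aeval_map
    (by ext; simp [algebraMap_eq_diagonal, diagonal_apply, apply_ite f]) p A

theorem charpoly_mapMatrix_eq_prod {S : Type*} [CommRing S] (f : R →+* S)
    (h : A.charpoly = ∏ i, (X - C (μ i))) :
    (f.mapMatrix A).charpoly = ∏ i, (X - C (f (μ i))) := by
  simp [RingHom.mapMatrix_apply, charpoly_map, h, Polynomial.map_prod]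

theorem det_aeval_eq_prod [IsDomain R] (h : A.charpoly = ∏ i, (X - C (μ i))) (p : R[X]) :
    (aeval A p).det = ∏ i, p.eval (μ i) := by
  let F := FractionRing R
  let φ : R →+* AlgebraicClosure F := (algebraMap F _).comp (algebraMap R F)
  have hφ : Function.Injective φ :=
    (algebraMap F (AlgebraicClosure F)).injective.comp (IsFractionRing.injective R F)
  apply hφ
  calc φ (aeval A p).det = (aeval (φ.mapMatrix A) (p.map φ)).det := by
        rw [aeval_map_mapMatrix, RingHom.map_det]
    _ = ∏ i, (p.map φ).eval (φ (μ i)) :=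
        det_aeval_eq_prod_of_splits (charpoly_mapMatrix_eq_prod φ h) (IsAlgClosed.splits _)
    _ = φ (∏ i, p.eval (μ i)) := by simp only [eval_map_apply, map_prod]

theorem eval_ne_zero_of_isUnit_aeval [IsDomain R] (h : A.charpoly = ∏ i, (X - C (μ i)))
    {q : R[X]} (hq : IsUnit (aeval A q)) (i : n) : q.eval (μ i) ≠ 0 := by
  have hprod : ∏ j, q.eval (μ j) ≠ 0 :=
    det_aeval_eq_prod h q ▸ ((isUnit_iff_isUnit_det _).mp hq).ne_zero
  exact Finset.prod_ne_zero_iff.mp hprod i (Finset.mem_univ i)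

end CommRing

variable {K : Type*} [Field K] {A : Matrix n n K} {μ : n → K}

theorem charpoly_aeval_mul_inv_aeval (h : A.charpoly = ∏ i, (X - C (μ i))) (p : K[X]) {q : K[X]}
    (hq : IsUnit (aeval A q)) :
    (aeval A p * (aeval A q)⁻¹).charpoly = ∏ i, (X - C (p.eval (μ i) / q.eval (μ i))) := by
  have hqdet : IsUnit (aeval A q).det := (isUnit_iff_isUnit_det _).mp hq
  have hdet : (aeval A q).det = ∏ i, q.eval (μ i) := det_aeval_eq_prod h q
  -- Clearing the denominator leaves a polynomial in `A`, with coefficients in the domain `K[X]`.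
  have hclear : charmatrix (aeval A p * (aeval A q)⁻¹) * C.mapMatrix (aeval A q)
      = aeval (C.mapMatrix A) (C X * q.map C - p.map C) := by
    rw [charmatrix, sub_mul, ← map_mul, nonsing_inv_mul_cancel_right _ _ hqdet, map_sub, map_mul,
      aeval_C, aeval_map_mapMatrix, aeval_map_mapMatrix]
    rfl
  refine mul_right_cancel₀ (b := C (aeval A q).det) (by simpa using hqdet.ne_zero) ?_
  calc (aeval A p * (aeval A q)⁻¹).charpoly * C (aeval A q).det
      = (charmatrix (aeval A p * (aeval A q)⁻¹) * C.mapMatrix (aeval A q)).det := by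
        rw [det_mul, ← RingHom.map_det, charpoly]
    _ = ∏ i, (X * C (q.eval (μ i)) - C (p.eval (μ i))) := by
        rw [hclear, det_aeval_eq_prod (charpoly_mapMatrix_eq_prod C h)]
        simp [eval_map_apply]
    _ = (∏ i, (X - C (p.eval (μ i) / q.eval (μ i)))) * C (aeval A q).det := by
        rw [hdet, map_prod, ← Finset.prod_mul_distrib]
        refine Finset.prod_congr rfl fun i _ => ?_
        rw [sub_mul, ← C_mul, div_mul_cancel₀ _ (eval_ne_zero_of_isUnit_aeval h hq i)]

theorem charpoly_smul_add_inv (hA : IsUnit A) (h : A.charpoly = ∏ i, (X - C (μ i))) (c : K) :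
    (c • (A + A⁻¹)).charpoly = ∏ i, (X - C (c * (μ i + (μ i)⁻¹))) := by
  have hdet : IsUnit A.det := (isUnit_iff_isUnit_det A).mp hA
  have hX : IsUnit (aeval A (X : K[X])) := by rwa [aeval_X]
  have hrat : c • (A + A⁻¹) = aeval A (C c * (X ^ 2 + 1)) * (aeval A (X : K[X]))⁻¹ := by
    simp [← Algebra.smul_def, add_mul, pow_two, Matrix.mul_assoc, mul_nonsing_inv A hdet]
  rw [hrat, charpoly_aeval_mul_inv_aeval h _ hX]
  refine Finset.prod_congr rfl fun i _ => ?_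
  have hμ : μ i ≠ 0 := by simpa only [eval_X] using eval_ne_zero_of_isUnit_aeval h hX i
  simp only [eval_mul, eval_C, eval_add, eval_pow, eval_X, eval_one]
  congr 2
  field_simp

theorem inv_mulVec_eq_inv_smul (hA : IsUnit A) {c : K} {w : n → K} (hw : A *ᵥ w = c • w) :
    A⁻¹ *ᵥ w = c⁻¹ • w := by
  have hdet : IsUnit A.det := (isUnit_iff_isUnit_det A).mp hA
  have hcw : w = c • A⁻¹ *ᵥ w := by
    rw [← mulVec_smul, ← hw, mulVec_mulVec, nonsing_inv_mul A hdet, one_mulVec]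
  obtain rfl | hc := eq_or_ne c 0
  · have hw0 : w = 0 := by rw [hcw, zero_smul]
    rw [hw0, mulVec_zero, smul_zero]
  · rw [eq_inv_smul_iff₀ hc, ← hcw]

end SpectralMapping

section AlternatingBlockMatrix

variable {n R : Type*} [Fintype n] [DecidableEq n] [CommRing R]

/-- `Mblock` over an arbitrary commutative ring and an arbitrary finite index type. -/
def alternatingBlockMatrix (A : Matrix n n R) :
    Matrix ((n ⊕ n) ⊕ (n ⊕ n)) ((n ⊕ n) ⊕ (n ⊕ n)) R :=
  fromBlocks (fromBlocks (-A) A A (-A)) (fromBlocks (-1) 1 1 (-1))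
    (fromBlocks (-1) 1 1 (-1)) (fromBlocks (-A⁻¹) A⁻¹ A⁻¹ (-A⁻¹))

namespace alternatingBlockMatrix

/-- The factor `P = [A; -A; 1; -1]` of `alternatingBlockMatrix A = P * Q`. -/
def leftFactor (A : Matrix n n R) : Matrix ((n ⊕ n) ⊕ (n ⊕ n)) n R :=
  fromRows (fromRows A (-A)) (fromRows 1 (-1))

/-- The factor `Q = [-1, 1, -A⁻¹, A⁻¹]` of `alternatingBlockMatrix A = P * Q`. -/
def rightFactor (A : Matrix n n R) : Matrix n ((n ⊕ n) ⊕ (n ⊕ n)) R :=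
  fromCols (fromCols (-1) 1) (fromCols (-A⁻¹) A⁻¹)

theorem leftFactor_mul_rightFactor {A : Matrix n n R} (hA : IsUnit A) :
    leftFactor A * rightFactor A = alternatingBlockMatrix A := by
  have hinv : A * A⁻¹ = 1 := mul_nonsing_inv A ((isUnit_iff_isUnit_det A).mp hA)
  simp [leftFactor, rightFactor, alternatingBlockMatrix, fromRows_mul_fromCols, hinv,
    -fromRows_mul, -mul_fromCols]

theorem rightFactor_mul_leftFactor (A : Matrix n n R) :
    rightFactor A * leftFactor A = -(2 : R) • (A + A⁻¹) := by
  simp only [leftFactor, rightFactor, fromCols_mul_fromRows, neg_mul, one_mul, mul_neg, mul_one]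
  module

theorem leftFactor_mulVec {A : Matrix n n R} {c : R} {w : n → R} (hw : A *ᵥ w = c • w) :
    leftFactor A *ᵥ w = Sum.elim (Sum.elim (c • w) (-(c • w))) (Sum.elim w (-w)) := by
  simp only [leftFactor, fromRows_mulVec, neg_mulVec, one_mulVec, hw]

theorem rank_eq_card [Nontrivial R] {A : Matrix n n R} (hA : IsUnit A) :
    (alternatingBlockMatrix A).rank = Fintype.card n := by
  let L : Matrix n ((n ⊕ n) ⊕ (n ⊕ n)) R := fromCols (fromCols 0 0) (fromCols 1 0)
  let S : Matrix ((n ⊕ n) ⊕ (n ⊕ n)) n R := fromRows (fromRows (-1) 0) (fromRows 0 0)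
  have hL : L * leftFactor A = 1 := by
    simp [L, leftFactor, fromCols_mul_fromRows]
  have hS : rightFactor A * S = 1 := by
    simp [S, rightFactor, fromCols_mul_fromRows]
  rw [← leftFactor_mul_rightFactor hA, rank_mul_eq_card_of_mul_eq_one hL hS]

theorem charpoly_eq_X_pow_mul {A : Matrix n n R} (hA : IsUnit A) :
    (alternatingBlockMatrix A).charpoly
      = X ^ (3 * Fintype.card n) * (-(2 : R) • (A + A⁻¹)).charpoly := by
  have hcard : Fintype.card ((n ⊕ n) ⊕ (n ⊕ n)) = 3 * Fintype.card n + Fintype.card n := by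
    simp only [Fintype.card_sum]
    ring
  rw [← leftFactor_mul_rightFactor hA, charpoly_mul_comm_of_le _ _ (by omega),
    rightFactor_mul_leftFactor, hcard, Nat.add_sub_cancel]

variable {K : Type*} [Field K] {A : Matrix n n K}

theorem finrank_ker_mulVecLin (hA : IsUnit A) :
    Module.finrank K (LinearMap.ker (alternatingBlockMatrix A).mulVecLin)
      = 3 * Fintype.card n := by
  have hnullity := (alternatingBlockMatrix A).mulVecLin.finrank_range_add_finrank_ker
  rw [← Matrix.rank, rank_eq_card hA, Module.finrank_fintype_fun_eq_card] at hnullity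
  simp only [Fintype.card_sum] at hnullity
  omega

theorem mulVec_sumElim_eq_smul (hA : IsUnit A) {c : K} {w : n → K} (hw : A *ᵥ w = c • w) :
    alternatingBlockMatrix A *ᵥ Sum.elim (Sum.elim (c • w) (-(c • w))) (Sum.elim w (-w))
      = (-(2 * (c + c⁻¹))) • Sum.elim (Sum.elim (c • w) (-(c • w))) (Sum.elim w (-w)) := by
  have hsum : (-(2 : K) • (A + A⁻¹)) *ᵥ w = (-(2 * (c + c⁻¹))) • w := by
    rw [smul_mulVec, add_mulVec, hw, inv_mulVec_eq_inv_smul hA hw, ← add_smul, smul_smul, neg_mul]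
  rw [← leftFactor_mulVec hw, ← leftFactor_mul_rightFactor hA, mulVec_mulVec, Matrix.mul_assoc,
    rightFactor_mul_leftFactor, ← mulVec_mulVec, hsum, mulVec_smul]

end alternatingBlockMatrix

end AlternatingBlockMatrix

theorem stmt_2_general {n K : Type*} [Fintype n] [DecidableEq n] [Field K] {A : Matrix n n K}
    (hA : IsUnit A) {μ : n → K} (hμ : A.charpoly = ∏ i, (X - C (μ i))) :
    (∀ (c : K) (w : n → K), A *ᵥ w = c • w →
      alternatingBlockMatrix A *ᵥ Sum.elim (Sum.elim (c • w) (-(c • w))) (Sum.elim w (-w))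
        = (-(2 * (c + c⁻¹))) • Sum.elim (Sum.elim (c • w) (-(c • w))) (Sum.elim w (-w))) ∧
    (alternatingBlockMatrix A).rank = Fintype.card n ∧
    Module.finrank K (LinearMap.ker (alternatingBlockMatrix A).mulVecLin) = 3 * Fintype.card n ∧
    (alternatingBlockMatrix A).charpoly
      = X ^ (3 * Fintype.card n) * ∏ i, (X + C (2 * (μ i + (μ i)⁻¹))) := by
  refine ⟨fun _ _ => alternatingBlockMatrix.mulVec_sumElim_eq_smul hA,
    alternatingBlockMatrix.rank_eq_card hA, alternatingBlockMatrix.finrank_ker_mulVecLin hA, ?_⟩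
  rw [alternatingBlockMatrix.charpoly_eq_X_pow_mul hA, charpoly_smul_add_inv hA hμ]
  simp only [neg_mul, map_neg, sub_neg_eq_add]

/-- (i) If A w = λ w with w ≠ 0 then v = (λw, −λw, w, −w) satisfies M v = −2(λ + 1/λ) v;
(ii) M has rank N, 0 is an eigenvalue of M of multiplicity 3N, and the eigenvalues of M
are −2(λ_i(A) + 1/λ_i(A)), i = 1,…,N, together with 0 of multiplicity 3N (expressed via
the characteristic polynomial of M). -/
theorem stmt_2 (N : ℕ) (hN : 0 < N) (A : Matrix (Fin N) (Fin N) ℝ) (hA : A.PosDef) :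
    (∀ (lam : ℝ) (w : Fin N → ℝ), w ≠ 0 → A *ᵥ w = lam • w →
      Mblock A *ᵥ Sum.elim (Sum.elim (lam • w) (-(lam • w))) (Sum.elim w (-w))
        = (-(2 * (lam + lam⁻¹)))
            • Sum.elim (Sum.elim (lam • w) (-(lam • w))) (Sum.elim w (-w))) ∧
    (Mblock A).rank = N ∧
    Module.finrank ℝ (LinearMap.ker (Mblock A).mulVecLin) = 3 * N ∧
    (Mblock A).charpoly
      = X ^ (3 * N)
        * ∏ i : Fin N, (X + C (2 * (hA.1.eigenvalues i + (hA.1.eigenvalues i)⁻¹))) := by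
  obtain ⟨hvec, hinv⟩ := stmt_2_general hA.isUnit hA.1.charpoly_eq
  have hM : Mblock A = alternatingBlockMatrix A := rfl
  rw [Fintype.card_fin] at hinv
  rw [hM]
  exact ⟨fun lam w _ => hvec lam w, hinv⟩

end
end

section
/- For every z ∈ ℝ₊^{4N} it holds that fes(q(z)) ≤ V(z), where fes(q) = dist((q, v(q)), [q^min, q^max] × [v^min, v^max]) and V(z) = ‖z − ⌈z + ∇D(z)⌉₊‖. In particular, fes(q(z)) = ‖⌈∇D(z)⌉₊‖ and ‖⌈∇D(z)⌉₊‖ ≤ ‖z − ⌈z + ∇D(z)⌉₊‖. -/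
open Matrix

noncomputable section

/-- V(z) = ‖z − ⌈z + ∇D(z)⌉₊‖ (Euclidean norm, componentwise projection onto ℝ₊). -/
def Vfun {N : ℕ} (A : Matrix (Fin N) (Fin N) ℝ) (d vmin vmax qmin qmax : Fin N → ℝ)
    (z : Fin 4 → Fin N → ℝ) : ℝ :=
  enorm4 (fun b i => z b i - max (z b i + gradD A d vmin vmax qmin qmax z b i) 0)

/-- fes(q) = Euclidean distance from (q, v(q)) to the box [q^min,q^max] × [v^min,v^max]. -/
def fes {N : ℕ} (A : Matrix (Fin N) (Fin N) ℝ) (d vmin vmax qmin qmax : Fin N → ℝ)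
    (q : Fin N → ℝ) : ℝ :=
  sInf { r : ℝ | ∃ y1 y2 : Fin N → ℝ,
    (∀ i, qmin i ≤ y1 i ∧ y1 i ≤ qmax i) ∧ (∀ i, vmin i ≤ y2 i ∧ y2 i ≤ vmax i) ∧
    r = Real.sqrt ((∑ i, (q i - y1 i) ^ 2) + ∑ i, (volt A d q i - y2 i) ^ 2) }

/-!
The distance to a box is attained by clamping every coordinate, and the coordinate `x` then moves by
`(l - x)⁺` or by `(x - u)⁺`, at least one of which vanishes. Applied to the point `(q, v(q))`, this
identifies `fes q` with the norm of the positive part of the constraint residuals at `q`, and at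
`q = q(z)` these are the entries of `∇D(z)`. The residual bound is coordinatewise: `(z + g)⁺` is
at least `z + g`, so it exceeds `z` by at least `g`, whence `g⁺ ≤ |z - (z + g)⁺|`.
-/

section Interval

variable {α : Type*}

section LatticeOrderedGroup

variable [AddCommGroup α] [Lattice α] [IsOrderedAddMonoid α]

theorem posPart_le_abs_sub_posPart_add (x g : α) : g⁺ ≤ |x - (x + g)⁺| := by
  have hg : g ≤ |x - (x + g)⁺| :=
    calc g ≤ (x + g)⁺ - x := le_sub_iff_add_le'.2 (le_posPart (x + g))
      _ ≤ |(x + g)⁺ - x| := le_abs_self _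
      _ = |x - (x + g)⁺| := abs_sub_comm _ _
  exact sup_le hg (abs_nonneg _)

theorem posPart_clamp_sub (l u x : α) : ((l ⊔ u ⊓ x) - x)⁺ = (l - x)⁺ := by
  have hsup : (l ⊔ u ⊓ x) ⊔ x = l ⊔ x := by
    rw [sup_assoc, sup_eq_right.2 (inf_le_right : u ⊓ x ≤ x)]
  rwa [sup_eq_add_posPart_sub _ x, sup_eq_add_posPart_sub l x, add_right_inj] at hsup

theorem posPart_sub_clamp {l u : α} (h : l ≤ u) (x : α) :
    (x - (l ⊔ u ⊓ x))⁺ = (x - u)⁺ := by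
  have hinf : x ⊓ (l ⊔ u ⊓ x) = x ⊓ u :=
    le_antisymm (inf_le_inf_left x (sup_le h inf_le_left))
      (le_inf inf_le_left (inf_comm x u ▸ le_sup_right))
  rwa [inf_eq_sub_posPart_sub x, inf_eq_sub_posPart_sub x u, sub_right_inj] at hinf

end LatticeOrderedGroup

variable [CommRing α] [LinearOrder α] [IsOrderedRing α]

theorem sq_posPart_sub_add_sq_posPart_sub (x y : α) :
    (y - x)⁺ ^ 2 + (x - y)⁺ ^ 2 = (x - y) ^ 2 := by
  rcases le_total x y with h | h
  · rw [posPart_of_nonneg (sub_nonneg.2 h), posPart_of_nonpos (sub_nonpos.2 h)]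
    ring
  · rw [posPart_of_nonpos (sub_nonpos.2 h), posPart_of_nonneg (sub_nonneg.2 h)]
    ring

theorem sq_sub_clamp {l u : α} (h : l ≤ u) (x : α) :
    (x - (l ⊔ u ⊓ x)) ^ 2 = (l - x)⁺ ^ 2 + (x - u)⁺ ^ 2 := by
  rw [← sq_posPart_sub_add_sq_posPart_sub, posPart_clamp_sub, posPart_sub_clamp h]

theorem sq_posPart_add_sq_posPart_le_sq_sub {l u y : α} (hy : y ∈ Set.Icc l u) (x : α) :
    (l - x)⁺ ^ 2 + (x - u)⁺ ^ 2 ≤ (x - y) ^ 2 := by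
  have hl : (l - x)⁺ ≤ (y - x)⁺ := posPart_mono (sub_le_sub_right hy.1 x)
  have hu : (x - u)⁺ ≤ (x - y)⁺ := posPart_mono (sub_le_sub_left hy.2 x)
  calc (l - x)⁺ ^ 2 + (x - u)⁺ ^ 2 ≤ (y - x)⁺ ^ 2 + (x - y)⁺ ^ 2 := by gcongr
    _ = (x - y) ^ 2 := sq_posPart_sub_add_sq_posPart_sub x y

end Interval

section Box

variable {ι : Type*}

/-- The box `∏ i, [l i, u i]` as a set in Euclidean space, so that distances to it are Euclidean. -/
def euclideanBox (l u : ι → ℝ) : Set (EuclideanSpace ℝ ι) :=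
  {y | ∀ i, y i ∈ Set.Icc (l i) (u i)}

theorem infDist_euclideanBox [Fintype ι] {l u : ι → ℝ} (h : ∀ i, l i ≤ u i)
    (x : EuclideanSpace ℝ ι) :
    Metric.infDist x (euclideanBox l u) = √(∑ i, ((l i - x i)⁺ ^ 2 + (x i - u i)⁺ ^ 2)) := by
  let c : EuclideanSpace ℝ ι := WithLp.toLp 2 fun i => l i ⊔ u i ⊓ x i
  have hc : c ∈ euclideanBox l u := fun i => ⟨le_sup_left, sup_le (h i) inf_le_left⟩
  apply le_antisymm
  · calc Metric.infDist x (euclideanBox l u) ≤ dist x c := Metric.infDist_le_dist_of_mem hc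
      _ = √(∑ i, ((l i - x i)⁺ ^ 2 + (x i - u i)⁺ ^ 2)) := by
        simp only [EuclideanSpace.dist_eq, Real.dist_eq, sq_abs, c, sq_sub_clamp (h _)]
  · refine (Metric.le_infDist ⟨c, hc⟩).2 fun y hy => ?_
    simp only [EuclideanSpace.dist_eq, Real.dist_eq, sq_abs]
    exact Real.sqrt_le_sqrt <| Finset.sum_le_sum fun i _ =>
      sq_posPart_add_sq_posPart_le_sq_sub (hy i) (x i)

end Box

section Feasibility

variable {N : ℕ}

theorem enorm4_le_enorm4 {w w' : Fin 4 → Fin N → ℝ} (h : ∀ b i, |w b i| ≤ |w' b i|) :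
    enorm4 w ≤ enorm4 w' :=
  Real.sqrt_le_sqrt <| Finset.sum_le_sum fun b _ => Finset.sum_le_sum fun i _ =>
    sq_le_sq.2 (h b i)

theorem enorm4_posPart_le_enorm4_sub_posPart_add (z g : Fin 4 → Fin N → ℝ) :
    enorm4 (fun b i => (g b i)⁺) ≤ enorm4 (fun b i => z b i - (z b i + g b i)⁺) :=
  enorm4_le_enorm4 fun b i =>
    (abs_of_nonneg (posPart_nonneg (g b i))).trans_le (posPart_le_abs_sub_posPart_add _ _)

variable (A : Matrix (Fin N) (Fin N) ℝ) (d vmin vmax qmin qmax q : Fin N → ℝ)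

/-- The signed residuals of the constraints `v^min ≤ v(q) ≤ v^max` and `q^min ≤ q ≤ q^max`, positive
where a constraint is violated. At `q = q(z)` this is the dual gradient `gradD`, with the same order
of the blocks. -/
def constraintResidual : Fin 4 → Fin N → ℝ :=
  ![vmin - volt A d q, volt A d q - vmax, qmin - q, q - qmax]

theorem gradD_eq_constraintResidual (z : Fin 4 → Fin N → ℝ) :
    gradD A d vmin vmax qmin qmax z = constraintResidual A d vmin vmax qmin qmax (qOf A z) :=
  rfl

theorem fes_eq_infDist_euclideanBox :
    fes A d vmin vmax qmin qmax q =
      Metric.infDist (WithLp.toLp 2 (Sum.elim q (volt A d q)))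
        (euclideanBox (Sum.elim qmin vmin) (Sum.elim qmax vmax)) := by
  rw [Metric.infDist_eq_iInf, fes, iInf]
  congr 1
  ext r
  constructor
  · rintro ⟨y₁, y₂, hy₁, hy₂, rfl⟩
    refine ⟨⟨WithLp.toLp 2 (Sum.elim y₁ y₂), Sum.rec hy₁ hy₂⟩, ?_⟩
    simp [EuclideanSpace.dist_eq, Real.dist_eq]
  · rintro ⟨⟨y, hy⟩, rfl⟩
    refine ⟨fun i => y (.inl i), fun i => y (.inr i), fun i => hy (.inl i),
      fun i => hy (.inr i), ?_⟩
    simp [EuclideanSpace.dist_eq, Real.dist_eq]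

variable {vmin vmax qmin qmax}

theorem fes_eq_enorm4_posPart_constraintResidual (hv : ∀ i, vmin i ≤ vmax i)
    (hq : ∀ i, qmin i ≤ qmax i) :
    fes A d vmin vmax qmin qmax q =
      enorm4 (fun b i => (constraintResidual A d vmin vmax qmin qmax q b i)⁺) := by
  have hbox : ∀ i, Sum.elim qmin vmin i ≤ Sum.elim qmax vmax i := Sum.rec hq hv
  rw [fes_eq_infDist_euclideanBox, infDist_euclideanBox hbox, enorm4]
  congr 1
  simp only [constraintResidual, Fin.sum_univ_four, Fintype.sum_sum_type, Sum.elim_inl,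
    Sum.elim_inr, cons_val, Pi.sub_apply, Finset.sum_add_distrib]
  ring

theorem stmt_4_general (hv : ∀ i, vmin i ≤ vmax i) (hq : ∀ i, qmin i ≤ qmax i)
    (z : Fin 4 → Fin N → ℝ) :
    let g := constraintResidual A d vmin vmax qmin qmax q
    fes A d vmin vmax qmin qmax q ≤ enorm4 (fun b i => z b i - max (z b i + g b i) 0) ∧
    fes A d vmin vmax qmin qmax q = enorm4 (fun b i => max (g b i) 0) ∧
    enorm4 (fun b i => max (g b i) 0) ≤ enorm4 (fun b i => z b i - max (z b i + g b i) 0) := by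
  intro g
  have heq : fes A d vmin vmax qmin qmax q = enorm4 (fun b i => max (g b i) 0) :=
    fes_eq_enorm4_posPart_constraintResidual A d q hv hq
  have hle : enorm4 (fun b i => max (g b i) 0) ≤
      enorm4 (fun b i => z b i - max (z b i + g b i) 0) :=
    enorm4_posPart_le_enorm4_sub_posPart_add z g
  exact ⟨heq.trans_le hle, heq, hle⟩

end Feasibility

/-- For every z ∈ ℝ₊^{4N}: fes(q(z)) ≤ V(z); in particular fes(q(z)) = ‖⌈∇D(z)⌉₊‖ and
‖⌈∇D(z)⌉₊‖ ≤ ‖z − ⌈z + ∇D(z)⌉₊‖ = V(z). -/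
theorem stmt_4 (N : ℕ) (hN : 0 < N) (A : Matrix (Fin N) (Fin N) ℝ) (hA : A.PosDef)
    (d vmin vmax qmin qmax : Fin N → ℝ)
    (hv : ∀ i, vmin i ≤ vmax i) (hq : ∀ i, qmin i ≤ qmax i)
    (z : Fin 4 → Fin N → ℝ) (hz : ∀ b i, 0 ≤ z b i) :
    fes A d vmin vmax qmin qmax (qOf A z) ≤ Vfun A d vmin vmax qmin qmax z ∧
    fes A d vmin vmax qmin qmax (qOf A z)
      = enorm4 (fun b i => max (gradD A d vmin vmax qmin qmax z b i) 0) ∧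
    enorm4 (fun b i => max (gradD A d vmin vmax qmin qmax z b i) 0)
      ≤ Vfun A d vmin vmax qmin qmax z := by
  rw [Vfun, gradD_eq_constraintResidual]
  exact stmt_4_general A d (qOf A z) hv hq z

end
end

section
/- Let ε > 0 and z = (λ, μ) ∈ ℝ₊^{4N} be such that V(z) > ε. Choose step sizes α, β > 0 with α < 2/L and β < min{ ε/(2 N^{3/2} L), √( α(1 − Lα/2) ε² / (2 N L) ) }. Define z̄ = (λ̄, μ̄) with λ̄ = λ + α ∇^λ D(z) and μ̄ = μ + β·sign(∇^μ D(z)) (sign componentwise). Then D(⌈z̄⌉₊) ≥ D(z) + δ(α,β), where δ(α,β) = min{ (α − (L/2)α²)·ε²/2 − N L β², (ε β L N)/(2 N^{3/2} L) − β² L N } > 0. -/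
open Matrix

noncomputable section

/-- sign(x) = 1 if x ≥ 0 and −1 if x < 0. -/
def sgn (x : ℝ) : ℝ := if 0 ≤ x then 1 else -1

/-- The Lagrangian dual function
D(z) = inf_q [ (1/2) qᵀAq + (λ^min)ᵀ(v^min − v(q)) + (λ^max)ᵀ(v(q) − v^max)
  + (μ^min)ᵀ(q^min − q) + (μ^max)ᵀ(q − q^max) ]. -/
def dualFun {N : ℕ} (A : Matrix (Fin N) (Fin N) ℝ) (d vmin vmax qmin qmax : Fin N → ℝ)
    (z : Fin 4 → Fin N → ℝ) : ℝ :=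
  ⨅ q : Fin N → ℝ,
    ((1 / 2) * (q ⬝ᵥ A *ᵥ q) + (z 0) ⬝ᵥ (vmin - volt A d q)
      + (z 1) ⬝ᵥ (volt A d q - vmax) + (z 2) ⬝ᵥ (qmin - q) + (z 3) ⬝ᵥ (q - qmax))

/-!
The dual function is a concave quadratic: completing the square in the Lagrangian gives
`D (z + p) = D z + ⟨∇D z, p⟩ - ½ q(p)ᵀ A q(p)`, and since `q(p) = x + A⁻¹ y` with `x`, `y`
differences of blocks of `p`, the spectral bound on `A + A⁻¹` yields `q(p)ᵀ A q(p) ≤ L ‖p‖²`.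
Hence `D` increases by at least `∑ (gᵢ pᵢ - (L/2) pᵢ²)` with `g = ∇D z`, a sum over coordinates.

Let `rᵢ` be the displacement of `zᵢ` under a projected gradient step of unit size, so that
`V(z) = ‖r‖`. A projected gradient step of size `α` gains at least `(α - (L/2) α²) rᵢ²` on its
coordinate. A projected sign step of size `β` gains at least `min β |rᵢ| · |rᵢ|` to first order
and loses at most `(L/2) β²` to second order. As `‖r‖² > ε²`, either the `λ`-coordinates carry at
least `ε²/2` of `‖r‖²`, or among the `2N` `μ`-coordinates one has `|rᵢ| > ε / (2 √N)`.
-/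

section QuadraticForm

variable {n : Type*} [Fintype n] {A : Matrix n n ℝ}

theorem dotProduct_mulVec_self_nonneg (hA : A.PosSemidef) (x : n → ℝ) : 0 ≤ x ⬝ᵥ A *ᵥ x := by
  simpa only [star_trivial] using hA.dotProduct_mulVec_nonneg x

theorem dotProduct_mulVec_comm_of_isSymm {R : Type*} [CommSemiring R] {M : Matrix n n R}
    (hM : M.IsSymm) (x y : n → R) : x ⬝ᵥ M *ᵥ y = y ⬝ᵥ M *ᵥ x := by
  rw [dotProduct_mulVec, ← mulVec_transpose, hM, dotProduct_comm]

theorem sub_dotProduct_self_le (x y : n → ℝ) :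
    (x - y) ⬝ᵥ (x - y) ≤ 2 * (x ⬝ᵥ x + y ⬝ᵥ y) := by
  simp only [dotProduct, ← Finset.sum_add_distrib, Finset.mul_sum, Pi.sub_apply]
  exact Finset.sum_le_sum fun i _ => by linarith [sq_nonneg (x i + y i)]

variable [DecidableEq n]

theorem mulVec_inv_mulVec {R : Type*} [CommRing R] {M : Matrix n n R} (hM : IsUnit M)
    (x : n → R) : M *ᵥ M⁻¹ *ᵥ x = x := by
  rw [mulVec_mulVec, mul_nonsing_inv M ((isUnit_iff_isUnit_det M).1 hM), one_mulVec]

open scoped MatrixOrder in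
theorem add_inv_le_algebraMap (hA : A.PosDef) {r : ℝ}
    (hr : ∀ i, hA.1.eigenvalues i + (hA.1.eigenvalues i)⁻¹ ≤ r) :
    A + A⁻¹ ≤ algebraMap ℝ (Matrix n n ℝ) r := by
  have hcont (f : ℝ → ℝ) : ContinuousOn f (spectrum ℝ A) := A.finite_real_spectrum.continuousOn f
  have hinv : cfc (·⁻¹ : ℝ → ℝ) A = A⁻¹ := by
    simpa only [coe_units_inv, IsUnit.unit_spec] using
      cfc_inv_id (R := ℝ) hA.isUnit.unit hA.1.isSelfAdjoint
  have hsum : cfc (fun t : ℝ => t + t⁻¹) A = A + A⁻¹ := by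
    rw [cfc_add A _ _ (hcont _) (hcont _), cfc_id' ℝ A hA.1.isSelfAdjoint, hinv]
  rw [← hsum]
  refine cfc_le_algebraMap _ r A (fun t ht => ?_) (hcont _) hA.1.isSelfAdjoint
  obtain ⟨i, rfl⟩ := hA.1.spectrum_real_eq_range_eigenvalues ▸ ht
  exact hr i

theorem dotProduct_mulVec_self_add_inv_le (hA : A.PosDef) {r : ℝ}
    (hr : ∀ i, hA.1.eigenvalues i + (hA.1.eigenvalues i)⁻¹ ≤ r) (x : n → ℝ) :
    x ⬝ᵥ A *ᵥ x + x ⬝ᵥ A⁻¹ *ᵥ x ≤ r * (x ⬝ᵥ x) := by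
  have h := dotProduct_mulVec_self_nonneg (le_iff.1 (add_inv_le_algebraMap hA hr)) x
  rw [Algebra.algebraMap_eq_smul_one, sub_mulVec, add_mulVec, smul_mulVec, one_mulVec,
    dotProduct_sub, dotProduct_add, dotProduct_smul, smul_eq_mul] at h
  linarith

-- Eigenvalue by eigenvalue: `a (x + y/a)² + a (x/a - y)² = (a + 1/a) (x² + y²)`.
theorem dotProduct_mulVec_add_inv_mulVec_add (hA : A.PosDef) (x y : n → ℝ) :
    (x + A⁻¹ *ᵥ y) ⬝ᵥ A *ᵥ (x + A⁻¹ *ᵥ y) + (A⁻¹ *ᵥ x - y) ⬝ᵥ A *ᵥ (A⁻¹ *ᵥ x - y) =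
      (x ⬝ᵥ A *ᵥ x + x ⬝ᵥ A⁻¹ *ᵥ x) + (y ⬝ᵥ A *ᵥ y + y ⬝ᵥ A⁻¹ *ᵥ y) := by
  have hsymm : A.IsSymm := isHermitian_iff_isSymm.1 hA.1
  have hxy := dotProduct_mulVec_comm_of_isSymm hsymm (A⁻¹ *ᵥ y) x
  have hyx := dotProduct_mulVec_comm_of_isSymm hsymm (A⁻¹ *ᵥ x) y
  simp only [mulVec_add, mulVec_sub, mulVec_inv_mulVec hA.isUnit, add_dotProduct,
    dotProduct_add, sub_dotProduct, dotProduct_sub] at hxy hyx ⊢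
  rw [hxy, hyx, dotProduct_comm (A⁻¹ *ᵥ x) x, dotProduct_comm (A⁻¹ *ᵥ y) y, dotProduct_comm y x]
  ring

theorem dotProduct_mulVec_add_inv_mulVec_le (hA : A.PosDef) {r : ℝ}
    (hr : ∀ i, hA.1.eigenvalues i + (hA.1.eigenvalues i)⁻¹ ≤ r) (x y : n → ℝ) :
    (x + A⁻¹ *ᵥ y) ⬝ᵥ A *ᵥ (x + A⁻¹ *ᵥ y) ≤ r * (x ⬝ᵥ x + y ⬝ᵥ y) := by
  linarith [dotProduct_mulVec_add_inv_mulVec_add hA x y,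
    dotProduct_mulVec_self_nonneg hA.posSemidef (A⁻¹ *ᵥ x - y),
    dotProduct_mulVec_self_add_inv_le hA hr x, dotProduct_mulVec_self_add_inv_le hA hr y]

theorem four_le_two_mul_eigenvalue_add_inv (hA : A.PosDef) (i : n) :
    4 ≤ 2 * (hA.1.eigenvalues i + (hA.1.eigenvalues i)⁻¹) := by
  have hpos := hA.eigenvalues_pos i
  field_simp
  linarith [sq_nonneg (hA.1.eigenvalues i - 1)]

end QuadraticForm

section DualFunction

variable {N : ℕ} {A : Matrix (Fin N) (Fin N) ℝ}

/-- The Lagrangian whose infimum over the primal variable `q` is `dualFun`. -/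
def lagrangian (A : Matrix (Fin N) (Fin N) ℝ) (d vmin vmax qmin qmax q : Fin N → ℝ)
    (z : Fin 4 → Fin N → ℝ) : ℝ :=
  (1 / 2) * (q ⬝ᵥ A *ᵥ q) + (z 0) ⬝ᵥ (vmin - volt A d q)
    + (z 1) ⬝ᵥ (volt A d q - vmax) + (z 2) ⬝ᵥ (qmin - q) + (z 3) ⬝ᵥ (q - qmax)

theorem mulVec_qOf (hA : IsUnit A) (z : Fin 4 → Fin N → ℝ) :
    A *ᵥ qOf A z = A *ᵥ (z 0 - z 1) + (z 2 - z 3) := by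
  rw [qOf, mulVec_add, mulVec_inv_mulVec hA]

theorem qOf_add (z p : Fin 4 → Fin N → ℝ) : qOf A (z + p) = qOf A z + qOf A p := by
  simp only [qOf, Pi.add_apply, mulVec_sub, mulVec_add]
  abel

variable (d vmin vmax qmin qmax : Fin N → ℝ)

theorem lagrangian_eq_add_sq (hA : A.PosDef) (q : Fin N → ℝ) (z : Fin 4 → Fin N → ℝ) :
    lagrangian A d vmin vmax qmin qmax q z = lagrangian A d vmin vmax qmin qmax (qOf A z) z
      + (1 / 2) * ((q - qOf A z) ⬝ᵥ A *ᵥ (q - qOf A z)) := by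
  have hsymm := dotProduct_mulVec_comm_of_isSymm (isHermitian_iff_isSymm.1 hA.1)
  have hcross (x : Fin N → ℝ) :
      x ⬝ᵥ A *ᵥ qOf A z = z 0 ⬝ᵥ A *ᵥ x - z 1 ⬝ᵥ A *ᵥ x + (z 2 ⬝ᵥ x - z 3 ⬝ᵥ x) := by
    rw [mulVec_qOf hA.isUnit, dotProduct_add, hsymm, sub_dotProduct, dotProduct_comm x,
      sub_dotProduct]
  have hq := hcross q
  have hqz := hcross (qOf A z)
  have hcomm := hsymm (qOf A z) q
  simp only [lagrangian, volt, dotProduct_sub, sub_dotProduct, dotProduct_add, mulVec_sub]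
  linarith

theorem lagrangian_qOf_add (z p : Fin 4 → Fin N → ℝ) :
    lagrangian A d vmin vmax qmin qmax (qOf A z) (z + p) =
      lagrangian A d vmin vmax qmin qmax (qOf A z) z
        + ∑ b, gradD A d vmin vmax qmin qmax z b ⬝ᵥ p b := by
  simp only [lagrangian, gradD, Fin.sum_univ_four, Pi.add_apply, add_dotProduct,
    dotProduct_comm _ (p _), cons_val]
  ring

theorem dualFun_eq_lagrangian (hA : A.PosDef) (z : Fin 4 → Fin N → ℝ) :
    dualFun A d vmin vmax qmin qmax z = lagrangian A d vmin vmax qmin qmax (qOf A z) z := by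
  refine IsLeast.csInf_eq ⟨⟨qOf A z, rfl⟩, ?_⟩
  rintro _ ⟨q, rfl⟩
  change _ ≤ lagrangian A d vmin vmax qmin qmax q z
  rw [lagrangian_eq_add_sq _ _ _ _ _ hA q z]
  linarith [dotProduct_mulVec_self_nonneg hA.posSemidef (q - qOf A z)]

theorem dualFun_add (hA : A.PosDef) (z p : Fin 4 → Fin N → ℝ) :
    dualFun A d vmin vmax qmin qmax (z + p) = dualFun A d vmin vmax qmin qmax z
      + ∑ b, gradD A d vmin vmax qmin qmax z b ⬝ᵥ p b
      - (1 / 2) * (qOf A p ⬝ᵥ A *ᵥ qOf A p) := by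
  have hsq := lagrangian_eq_add_sq d vmin vmax qmin qmax hA (qOf A z) (z + p)
  rw [lagrangian_qOf_add, qOf_add, sub_add_cancel_left, mulVec_neg, neg_dotProduct_neg,
    ← qOf_add] at hsq
  rw [dualFun_eq_lagrangian _ _ _ _ _ hA, dualFun_eq_lagrangian _ _ _ _ _ hA]
  linarith

theorem qOf_dotProduct_mulVec_qOf_le (hA : A.PosDef) {L : ℝ} (hL₀ : 0 ≤ L)
    (hL : ∀ i, 2 * (hA.1.eigenvalues i + (hA.1.eigenvalues i)⁻¹) ≤ L)
    (p : Fin 4 → Fin N → ℝ) :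
    qOf A p ⬝ᵥ A *ᵥ qOf A p ≤ L * ∑ b, p b ⬝ᵥ p b := by
  have hr (i) : hA.1.eigenvalues i + (hA.1.eigenvalues i)⁻¹ ≤ L / 2 := by linarith [hL i]
  have hparts : (p 0 - p 1) ⬝ᵥ (p 0 - p 1) + (p 2 - p 3) ⬝ᵥ (p 2 - p 3) ≤
      2 * ∑ b, p b ⬝ᵥ p b := by
    rw [Fin.sum_univ_four]
    linarith [sub_dotProduct_self_le (p 0) (p 1), sub_dotProduct_self_le (p 2) (p 3)]
  calc qOf A p ⬝ᵥ A *ᵥ qOf A p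
      ≤ L / 2 * ((p 0 - p 1) ⬝ᵥ (p 0 - p 1) + (p 2 - p 3) ⬝ᵥ (p 2 - p 3)) :=
        dotProduct_mulVec_add_inv_mulVec_le hA hr _ _
    _ ≤ L / 2 * (2 * ∑ b, p b ⬝ᵥ p b) := by gcongr
    _ = L * ∑ b, p b ⬝ᵥ p b := by ring

theorem dualFun_add_sum_le_dualFun_add (hA : A.PosDef) {L : ℝ} (hL₀ : 0 ≤ L)
    (hL : ∀ i, 2 * (hA.1.eigenvalues i + (hA.1.eigenvalues i)⁻¹) ≤ L)
    (z p : Fin 4 → Fin N → ℝ) :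
    dualFun A d vmin vmax qmin qmax z
      + ∑ b, ∑ i, (gradD A d vmin vmax qmin qmax z b i * p b i - L / 2 * p b i ^ 2)
      ≤ dualFun A d vmin vmax qmin qmax (z + p) := by
  have hcurv := qOf_dotProduct_mulVec_qOf_le hA hL₀ hL p
  rw [dualFun_add _ _ _ _ _ hA]
  simp only [dotProduct, ← sq, Finset.sum_sub_distrib, ← Finset.mul_sum] at hcurv ⊢
  linarith

end DualFunction

section ProjectedStep

/-- The displacement `⌈z + s⌉₊ - z` of a dual coordinate `z` moved by `s` and then projected onto
`[0, ∞)`. For `s` the partial derivative of the dual function it is, up to sign, a coordinate of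
the optimality residual whose norm is `Vfun`. -/
def projStep (z s : ℝ) : ℝ := max (z + s) 0 - z

theorem projStep_of_nonneg {z s : ℝ} (hz : 0 ≤ z) (hs : 0 ≤ s) : projStep z s = s := by
  rw [projStep, max_eq_left (add_nonneg hz hs), add_sub_cancel_left]

theorem projStep_eq_neg_min (z s : ℝ) : projStep z s = -min (-s) z := by
  rw [projStep, ← max_sub_sub_right, add_sub_cancel_left, zero_sub, ← max_neg_neg, neg_neg]

theorem abs_projStep_of_nonpos {z s : ℝ} (hz : 0 ≤ z) (hs : s ≤ 0) :
    |projStep z s| = min (-s) z := by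
  rw [projStep_eq_neg_min, abs_neg, abs_of_nonneg (le_min (neg_nonneg.2 hs) hz)]

theorem abs_projStep_le {z : ℝ} (hz : 0 ≤ z) (s : ℝ) : |projStep z s| ≤ |s| := by
  rcases le_total 0 s with hs | hs
  · rw [projStep_of_nonneg hz hs]
  · rw [abs_projStep_of_nonpos hz hs, abs_of_nonpos hs]
    exact min_le_left _ _

theorem sq_projStep_le_mul {z : ℝ} (hz : 0 ≤ z) (s : ℝ) :
    projStep z s ^ 2 ≤ s * projStep z s := by
  rcases le_total 0 s with hs | hs
  · rw [projStep_of_nonneg hz hs, sq]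
  · rw [projStep_eq_neg_min, neg_sq, mul_neg, ← neg_mul, sq]
    exact mul_le_mul_of_nonneg_right (min_le_left _ _) (le_min (neg_nonneg.2 hs) hz)

theorem mul_abs_projStep_le {z α : ℝ} (hz : 0 ≤ z) (hα₀ : 0 ≤ α) (hα₁ : α ≤ 1) (s : ℝ) :
    α * |projStep z s| ≤ |projStep z (α * s)| := by
  rcases le_total 0 s with hs | hs
  · rw [projStep_of_nonneg hz hs, projStep_of_nonneg hz (mul_nonneg hα₀ hs), abs_mul,
      abs_of_nonneg hα₀]
  · rw [abs_projStep_of_nonpos hz hs,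
      abs_projStep_of_nonpos hz (mul_nonpos_of_nonneg_of_nonpos hα₀ hs), mul_min_of_nonneg _ _ hα₀,
      mul_neg]
    exact min_le_min_left _ (mul_le_of_le_one_left hz hα₁)

theorem sq_projStep_le_gradient_gain {z g α L : ℝ} (hz : 0 ≤ z) (hα₀ : 0 < α) (hα₁ : α ≤ 1)
    (hαL : L * α ≤ 2) :
    (α - L / 2 * α ^ 2) * projStep z g ^ 2 ≤
      g * projStep z (α * g) - L / 2 * projStep z (α * g) ^ 2 := by
  set r := projStep z g
  set p := projStep z (α * g)
  have hgp : p ^ 2 ≤ α * (g * p) := (sq_projStep_le_mul hz _).trans_eq (mul_assoc _ _ _)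
  have hrp : (α * r) ^ 2 ≤ p ^ 2 := by
    rw [sq_le_sq, abs_mul, abs_of_pos hα₀]
    exact mul_abs_projStep_le hz hα₀.le hα₁ g
  refine le_of_mul_le_mul_left ?_ hα₀
  calc α * ((α - L / 2 * α ^ 2) * r ^ 2) = (1 - L * α / 2) * (α * r) ^ 2 := by ring
    _ ≤ (1 - L * α / 2) * p ^ 2 := by gcongr; linarith
    _ ≤ α * (g * p - L / 2 * p ^ 2) := by linarith

theorem abs_sgn (x : ℝ) : |sgn x| = 1 := by
  unfold sgn
  split_ifs <;> simp only [abs_one, abs_neg]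

theorem sq_projStep_sgn_le {z β : ℝ} (hz : 0 ≤ z) (g : ℝ) :
    projStep z (β * sgn g) ^ 2 ≤ β ^ 2 := by
  simpa only [sq_le_sq, abs_mul, abs_sgn, mul_one] using abs_projStep_le hz (β * sgn g)

theorem min_mul_abs_projStep_le_sgn_gain {z β : ℝ} (hz : 0 ≤ z) (hβ : 0 ≤ β) (g : ℝ) :
    min β |projStep z g| * |projStep z g| ≤ g * projStep z (β * sgn g) := by
  unfold sgn
  split_ifs with hg
  · rw [mul_one, projStep_of_nonneg hz hg, projStep_of_nonneg hz hβ, abs_of_nonneg hg, mul_comm g]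
    exact mul_le_mul_of_nonneg_right (min_le_left _ _) hg
  · have hg' : g ≤ 0 := (not_le.1 hg).le
    rw [abs_projStep_of_nonpos hz hg', projStep_eq_neg_min z (β * -1), mul_neg_one, neg_neg,
      mul_neg, ← neg_mul, mul_comm]
    exact mul_le_mul (min_le_left _ _) (min_le_min_left _ (min_le_right _ _))
      (le_min hβ (le_min (neg_nonneg.2 hg') hz)) (neg_nonneg.2 hg')

theorem mul_projStep_sgn_nonneg {z : ℝ} (hz : 0 ≤ z) (hβ : 0 ≤ β) (g : ℝ) :
    0 ≤ g * projStep z (β * sgn g) :=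
  (mul_nonneg (le_min hβ (abs_nonneg _)) (abs_nonneg _)).trans
    (min_mul_abs_projStep_le_sgn_gain hz hβ g)

end ProjectedStep

section HybridStep

open Finset

variable {ι : Type*} {s : Finset ι} {z g : ι → ℝ} {α β c L : ℝ}

theorem mul_sum_sq_projStep_le_sum_gradient_gain (hz : ∀ i, 0 ≤ z i) (hα₀ : 0 < α) (hα₁ : α ≤ 1)
    (hαL : L * α ≤ 2) :
    (α - L / 2 * α ^ 2) * ∑ i ∈ s, projStep (z i) (g i) ^ 2 ≤
      ∑ i ∈ s, (g i * projStep (z i) (α * g i) - L / 2 * projStep (z i) (α * g i) ^ 2) := by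
  rw [mul_sum]
  exact sum_le_sum fun i _ => sq_projStep_le_gradient_gain (hz i) hα₀ hα₁ hαL

theorem sum_sgn_gain_sub_le (hz : ∀ i, 0 ≤ z i) (hL : 0 ≤ L) :
    ∑ i ∈ s, g i * projStep (z i) (β * sgn (g i)) - #s * (L / 2 * β ^ 2) ≤
      ∑ i ∈ s, (g i * projStep (z i) (β * sgn (g i))
        - L / 2 * projStep (z i) (β * sgn (g i)) ^ 2) := by
  rw [sum_sub_distrib, ← nsmul_eq_mul]
  gcongr
  exact sum_le_card_nsmul _ _ _ fun i _ =>
    mul_le_mul_of_nonneg_left (sq_projStep_sgn_le (hz i) _) (by positivity)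

theorem mul_le_sum_sgn_gain (hz : ∀ i, 0 ≤ z i) (hβ : 0 ≤ β) (hβc : β ≤ c)
    (hs : #s * c ^ 2 < ∑ i ∈ s, projStep (z i) (g i) ^ 2) :
    β * c ≤ ∑ i ∈ s, g i * projStep (z i) (β * sgn (g i)) := by
  obtain ⟨i, hi, hci⟩ : ∃ i ∈ s, c ^ 2 < projStep (z i) (g i) ^ 2 :=
    exists_lt_of_sum_lt (by rwa [sum_const, nsmul_eq_mul])
  have hcr : c ≤ |projStep (z i) (g i)| := (le_abs_self c).trans (sq_lt_sq.1 hci).le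
  calc β * c ≤ min β |projStep (z i) (g i)| * |projStep (z i) (g i)| := by
        rw [min_eq_left (hβc.trans hcr)]
        exact mul_le_mul_of_nonneg_left hcr hβ
    _ ≤ g i * projStep (z i) (β * sgn (g i)) := min_mul_abs_projStep_le_sgn_gain (hz i) hβ _
    _ ≤ ∑ i ∈ s, g i * projStep (z i) (β * sgn (g i)) :=
        single_le_sum (f := fun i => g i * projStep (z i) (β * sgn (g i)))
          (fun j _ => mul_projStep_sgn_nonneg (hz j) hβ _) hi

/-- The raw hybrid step before projection: a gradient step of size `α` on the coordinates
satisfying `P` (the multipliers `λ`), a sign step of size `β` on the others (the multipliers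
`μ`). -/
def hybridStep (P : ι → Prop) [DecidablePred P] (α β : ℝ) (g : ι → ℝ) (i : ι) : ℝ :=
  if P i then α * g i else β * sgn (g i)

variable [Fintype ι] {P : ι → Prop} [DecidablePred P]

theorem sum_hybridStep (F : ι → ℝ → ℝ) :
    ∑ i, F i (hybridStep P α β g i) =
      ∑ i with P i, F i (α * g i) + ∑ i with ¬P i, F i (β * sgn (g i)) := by
  simp only [hybridStep, apply_ite, sum_ite]

theorem min_sub_le_sum_hybridStep_gain (hz : ∀ i, 0 ≤ z i) (hL : 0 ≤ L)
    (hα₀ : 0 < α) (hα₁ : α ≤ 1) (hαL : L * α ≤ 2) (hβ : 0 ≤ β) (hβc : β ≤ c) {R : ℝ}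
    (hc : #{i | ¬P i} * c ^ 2 ≤ R / 2) (hR : R < ∑ i, projStep (z i) (g i) ^ 2) :
    min ((α - L / 2 * α ^ 2) * (R / 2)) (β * c) - #{i | ¬P i} * (L / 2 * β ^ 2) ≤
      ∑ i, (g i * projStep (z i) (hybridStep P α β g i)
        - L / 2 * projStep (z i) (hybridStep P α β g i) ^ 2) := by
  have hgrad := mul_sum_sq_projStep_le_sum_gradient_gain (s := {i | P i}) (g := g) hz hα₀ hα₁ hαL
  have hsgn := sum_sgn_gain_sub_le (s := {i | ¬P i}) (g := g) (β := β) hz hL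
  have hκ : 0 ≤ α - L / 2 * α ^ 2 := by nlinarith
  set κ := α - L / 2 * α ^ 2
  rw [sum_hybridStep fun i t => g i * projStep (z i) t - L / 2 * projStep (z i) t ^ 2]
  suffices hgain : min (κ * (R / 2)) (β * c) ≤ κ * ∑ i with P i, projStep (z i) (g i) ^ 2
      + ∑ i with ¬P i, g i * projStep (z i) (β * sgn (g i)) by linarith
  rw [← sum_filter_add_sum_filter_not univ P] at hR
  rcases le_or_gt (R / 2) (∑ i with P i, projStep (z i) (g i) ^ 2) with hcase | hcase
  · refine (min_le_left _ _).trans (le_add_of_le_of_nonneg ?_ ?_)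
    · exact mul_le_mul_of_nonneg_left hcase hκ
    · exact sum_nonneg fun i _ => mul_projStep_sgn_nonneg (hz i) hβ _
  · refine (min_le_right _ _).trans (le_add_of_nonneg_of_le ?_ ?_)
    · positivity
    · exact mul_le_sum_sgn_gain hz hβ hβc (by linarith)

end HybridStep

section DescentStep

open Finset

variable {N : ℕ} {A : Matrix (Fin N) (Fin N) ℝ} {d vmin vmax qmin qmax : Fin N → ℝ}
  {z : Fin 4 → Fin N → ℝ} {α β ε L : ℝ}

theorem Vfun_sq : Vfun A d vmin vmax qmin qmax z ^ 2 =
    ∑ x : Fin 4 × Fin N, projStep (z x.1 x.2) (gradD A d vmin vmax qmin qmax z x.1 x.2) ^ 2 := by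
  rw [Vfun, enorm4, Real.sq_sqrt (by positivity), Fintype.sum_prod_type]
  simp only [projStep, ← sub_sq_comm]

theorem card_filter_not_lt_two (N : ℕ) : #{x : Fin 4 × Fin N | ¬(x.1 : ℕ) < 2} = 2 * N := by
  have hprod : ({x : Fin 4 × Fin N | ¬(x.1 : ℕ) < 2} : Finset _) =
      ({b : Fin 4 | ¬(b : ℕ) < 2} : Finset _) ×ˢ univ := by
    ext; simp
  rw [hprod, card_product, card_univ, Fintype.card_fin]
  rfl

theorem dualFun_add_min_sub_le_projected_step (hA : A.PosDef) (hN : 0 < N)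
    (hL : ∀ i, 2 * (hA.1.eigenvalues i + (hA.1.eigenvalues i)⁻¹) ≤ L)
    (hz : ∀ b i, 0 ≤ z b i) (hε : 0 ≤ ε) (hV : ε < Vfun A d vmin vmax qmin qmax z)
    (hα₀ : 0 < α) (hαL : L * α ≤ 2) (hβ₀ : 0 ≤ β) (hβ : β ≤ ε / (2 * √N)) :
    dualFun A d vmin vmax qmin qmax z
        + (min ((α - L / 2 * α ^ 2) * (ε ^ 2 / 2)) (β * (ε / (2 * √N))) - N * L * β ^ 2)
      ≤ dualFun A d vmin vmax qmin qmax
          (fun b i =>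
            max (z b i + (if (b : ℕ) < 2 then α * gradD A d vmin vmax qmin qmax z b i
              else β * sgn (gradD A d vmin vmax qmin qmax z b i))) 0) := by
  set g := gradD A d vmin vmax qmin qmax z
  set p : Fin 4 → Fin N → ℝ := fun b i =>
    projStep (z b i) (if (b : ℕ) < 2 then α * g b i else β * sgn (g b i))
  have hL₄ : 4 ≤ L := (four_le_two_mul_eigenvalue_add_inv hA ⟨0, hN⟩).trans (hL _)
  have hα₁ : α ≤ 1 := by nlinarith
  have hc : #{x : Fin 4 × Fin N | ¬(x.1 : ℕ) < 2} * (ε / (2 * √N)) ^ 2 ≤ ε ^ 2 / 2 := by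
    rw [card_filter_not_lt_two, div_pow, mul_pow, Real.sq_sqrt N.cast_nonneg]
    push_cast
    field_simp
    norm_num
  have hgain : min ((α - L / 2 * α ^ 2) * (ε ^ 2 / 2)) (β * (ε / (2 * √N))) - N * L * β ^ 2 ≤
      ∑ b, ∑ i, (g b i * p b i - L / 2 * p b i ^ 2) := by
    have h := min_sub_le_sum_hybridStep_gain (z := fun x : Fin 4 × Fin N => z x.1 x.2)
      (g := fun x => g x.1 x.2) (fun x => hz x.1 x.2) (by linarith) hα₀ hα₁ hαL hβ₀ hβ hc
      (Vfun_sq (z := z) ▸ pow_lt_pow_left₀ hV hε two_ne_zero)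
    rw [card_filter_not_lt_two, Fintype.sum_prod_type] at h
    refine le_trans (le_of_eq ?_) h
    push_cast
    ring
  have hproj : (fun b i => max (z b i + if (b : ℕ) < 2 then α * g b i else β * sgn (g b i)) 0) =
      z + p := by
    ext b i
    simp only [p, projStep, Pi.add_apply, add_sub_cancel]
  rw [hproj]
  exact (add_le_add_right hgain _).trans
    (dualFun_add_sum_le_dualFun_add _ _ _ _ _ hA (by linarith) hL z p)

theorem rpow_three_halves {x : ℝ} (hx : 0 ≤ x) : x ^ ((3 : ℝ) / 2) = x * √x := by
  rw [Real.rpow_div_two_eq_sqrt 3 hx]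
  norm_cast
  rw [pow_succ, Real.sq_sqrt hx]

theorem mul_sq_lt_of_lt_sqrt {n : ℝ} (hn : 0 < n) (hL : 0 < L) (hβ₀ : 0 ≤ β)
    (hβ : β < √(α * (1 - L * α / 2) * ε ^ 2 / (2 * n * L))) :
    n * L * β ^ 2 < (α - L / 2 * α ^ 2) * (ε ^ 2 / 2) := by
  rw [Real.lt_sqrt hβ₀, lt_div_iff₀ (by positivity)] at hβ
  linarith

theorem mul_lt_div_sqrt_of_lt_div_rpow {n : ℝ} (hn : 0 < n) (hL : 0 < L)
    (hβ : β < ε / (2 * n ^ ((3 : ℝ) / 2) * L)) : n * L * β < ε / (2 * √n) := by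
  rw [rpow_three_halves hn.le, lt_div_iff₀ (by positivity)] at hβ
  rw [lt_div_iff₀ (by positivity)]
  linarith

theorem mul_div_rpow_three_halves {n : ℝ} (hn : 0 < n) (hL : L ≠ 0) :
    ε * β * L * n / (2 * n ^ ((3 : ℝ) / 2) * L) = β * (ε / (2 * √n)) := by
  rw [rpow_three_halves hn.le]
  field_simp

end DescentStep

theorem stmt_8_general (N : ℕ) (hN : 0 < N) (A : Matrix (Fin N) (Fin N) ℝ) (hA : A.PosDef)
    (d vmin vmax qmin qmax : Fin N → ℝ)
    (L : ℝ) (hL : ∀ i, 2 * (hA.1.eigenvalues i + (hA.1.eigenvalues i)⁻¹) ≤ L)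
    (ε : ℝ) (hε : 0 < ε)
    (z : Fin 4 → Fin N → ℝ) (hz : ∀ b i, 0 ≤ z b i)
    (hV : ε < Vfun A d vmin vmax qmin qmax z)
    (α β : ℝ) (hα0 : 0 < α) (hα : α < 2 / L) (hβ0 : 0 < β)
    (hβ : β < min (ε / (2 * (N : ℝ) ^ ((3 : ℝ) / 2) * L))
      (Real.sqrt (α * (1 - L * α / 2) * ε ^ 2 / (2 * (N : ℝ) * L)))) :
    0 < min ((α - (L / 2) * α ^ 2) * (ε ^ 2 / 2) - (N : ℝ) * L * β ^ 2)
        (ε * β * L * (N : ℝ) / (2 * (N : ℝ) ^ ((3 : ℝ) / 2) * L) - β ^ 2 * L * (N : ℝ)) ∧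
    dualFun A d vmin vmax qmin qmax z
        + min ((α - (L / 2) * α ^ 2) * (ε ^ 2 / 2) - (N : ℝ) * L * β ^ 2)
            (ε * β * L * (N : ℝ) / (2 * (N : ℝ) ^ ((3 : ℝ) / 2) * L) - β ^ 2 * L * (N : ℝ))
      ≤ dualFun A d vmin vmax qmin qmax
          (fun b i =>
            max (z b i + (if (b : ℕ) < 2 then α * gradD A d vmin vmax qmin qmax z b i
              else β * sgn (gradD A d vmin vmax qmin qmax z b i))) 0) := by
  have hN₁ : (1 : ℝ) ≤ N := by exact_mod_cast hN
  have hN₀ : (0 : ℝ) < N := by linarith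
  have hL₄ : 4 ≤ L := (four_le_two_mul_eigenvalue_add_inv hA ⟨0, hN⟩).trans (hL _)
  have hL₀ : 0 < L := by linarith
  have hαL : L * α ≤ 2 := ((lt_div_iff₀' hL₀).1 hα).le
  have hgrad : N * L * β ^ 2 < (α - L / 2 * α ^ 2) * (ε ^ 2 / 2) :=
    mul_sq_lt_of_lt_sqrt hN₀ hL₀ hβ0.le (lt_min_iff.1 hβ).2
  have hsgn : N * L * β < ε / (2 * √N) := mul_lt_div_sqrt_of_lt_div_rpow hN₀ hL₀ (lt_min_iff.1 hβ).1
  have hβle : β ≤ ε / (2 * √N) :=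
    (le_mul_of_one_le_left hβ0.le (one_le_mul_of_one_le_of_one_le hN₁ (by linarith))).trans hsgn.le
  rw [mul_div_rpow_three_halves hN₀ hL₀.ne',
    show β ^ 2 * L * N = N * L * β ^ 2 by ring, min_sub_sub_right]
  exact ⟨sub_pos.2 (lt_min hgrad (by linarith [mul_lt_mul_of_pos_left hsgn hβ0])),
    dualFun_add_min_sub_le_projected_step hA hN hL hz hε.le hV hα0 hαL hβ0.le hβle⟩

/-- Descent step (Proposition 2): if V(z) > ε and the step sizes satisfy
α < 2/L, β < min{ε/(2N^{3/2}L), √(α(1 − Lα/2)ε²/(2NL))}, then the projected hybrid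
gradient/sign step z̄ = (λ + α∇^λD(z), μ + β·sign(∇^μD(z))) satisfies
D(⌈z̄⌉₊) ≥ D(z) + δ(α,β) with
δ(α,β) = min{(α − (L/2)α²)ε²/2 − NLβ², εβLN/(2N^{3/2}L) − β²LN} > 0. -/
theorem stmt_8 (N : ℕ) (hN : 0 < N) (A : Matrix (Fin N) (Fin N) ℝ) (hA : A.PosDef)
    (d vmin vmax qmin qmax : Fin N → ℝ)
    (hv : ∀ i, vmin i ≤ vmax i) (hq : ∀ i, qmin i ≤ qmax i)
    (L : ℝ)
    (hL : IsGreatest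
      (Set.range fun i : Fin N => 2 * (hA.1.eigenvalues i + (hA.1.eigenvalues i)⁻¹)) L)
    (ε : ℝ) (hε : 0 < ε)
    (z : Fin 4 → Fin N → ℝ) (hz : ∀ b i, 0 ≤ z b i)
    (hV : ε < Vfun A d vmin vmax qmin qmax z)
    (α β : ℝ) (hα0 : 0 < α) (hα : α < 2 / L) (hβ0 : 0 < β)
    (hβ : β < min (ε / (2 * (N : ℝ) ^ ((3 : ℝ) / 2) * L))
      (Real.sqrt (α * (1 - L * α / 2) * ε ^ 2 / (2 * (N : ℝ) * L)))) :
    0 < min ((α - (L / 2) * α ^ 2) * (ε ^ 2 / 2) - (N : ℝ) * L * β ^ 2)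
        (ε * β * L * (N : ℝ) / (2 * (N : ℝ) ^ ((3 : ℝ) / 2) * L) - β ^ 2 * L * (N : ℝ)) ∧
    dualFun A d vmin vmax qmin qmax z
        + min ((α - (L / 2) * α ^ 2) * (ε ^ 2 / 2) - (N : ℝ) * L * β ^ 2)
            (ε * β * L * (N : ℝ) / (2 * (N : ℝ) ^ ((3 : ℝ) / 2) * L) - β ^ 2 * L * (N : ℝ))
      ≤ dualFun A d vmin vmax qmin qmax
          (fun b i =>
            max (z b i + (if (b : ℕ) < 2 then α * gradD A d vmin vmax qmin qmax z b i
              else β * sgn (gradD A d vmin vmax qmin qmax z b i))) 0) :=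
  stmt_8_general N hN A hA d vmin vmax qmin qmax L (fun i => hL.2 ⟨i, rfl⟩) ε hε z hz hV
    α β hα0 hα hβ0 hβ

end
end

section
/- Assume the primal problem is feasible. Let ε ∈ (0,1] and choose step sizes α = 1/L and β = ε/(4 N^{3/2} L). Then there exists T ∈ ℕ such that the VC-LB iterates satisfy fes(q(z(T))) ≤ ε, and T is upper bounded by T ≤ ⌈ 16 N³ L Q λ_max(A) / ε² ⌉, where Q = max{ (q^min_i)², (q^max_i)² : i = 1,…,N } and λ_max(A) is the largest eigenvalue of A. -/
open Matrix

noncomputable section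

/-!
The dual function is the concave quadratic
`D (z + s) = D z + ⟪∇D z, s⟫ - 1 / 2 * qOf s ⬝ᵥ A *ᵥ qOf s`, and by the spectral theorem its
curvature `qOf s ⬝ᵥ A *ᵥ qOf s` is at most `L * ‖s‖ ^ 2`. Hence the ascent in one iteration can be
bounded coordinate by coordinate. With `P` the squared violation of the voltage constraints and `S`
the sum of the violations of the power constraints, `D` grows by at least
`P / (2 * L) + β * S - N * L * β ^ 2`. The feasibility gap is at most `√(P + S ^ 2)`, so as long as
it exceeds `ε`, each iteration gains at least `β * (ε - N * L * β)`. By weak duality `D` never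
exceeds the primal objective at a feasible point, which is at most `N * Q * lmax / 2`, and this
limits the number of such iterations.
-/

namespace VoltageControl

section QuadraticForm

variable {ι : Type*} [Fintype ι]

lemma dotProduct_mulVec_comm {R : Type*} [CommSemiring R] [StarRing R] [TrivialStar R]
    {A : Matrix ι ι R} (hA : A.IsHermitian) (v w : ι → R) : v ⬝ᵥ A *ᵥ w = w ⬝ᵥ A *ᵥ v := by
  rw [dotProduct_mulVec, ← mulVec_transpose, ← conjTranspose_eq_transpose_of_trivial, hA.eq,
    dotProduct_comm]

lemma dotProduct_self_le_of_mem_Icc {a b x : ι → ℝ} {Q : ℝ} (hx : x ∈ Set.Icc a b)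
    (ha : ∀ i, a i ^ 2 ≤ Q) (hb : ∀ i, b i ^ 2 ≤ Q) : x ⬝ᵥ x ≤ Fintype.card ι * Q := by
  have hcoord (i : ι) : x i ^ 2 ≤ max (a i ^ 2) (b i ^ 2) :=
    even_two.convexOn_pow.le_max_of_mem_Icc (Set.mem_univ _) (Set.mem_univ _) ⟨hx.1 i, hx.2 i⟩
  calc x ⬝ᵥ x = ∑ i, x i ^ 2 := by simp only [dotProduct, sq]
    _ ≤ ∑ _i : ι, Q := Finset.sum_le_sum fun i _ => (hcoord i).trans (max_le (ha i) (hb i))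
    _ = Fintype.card ι * Q := by simp

variable [DecidableEq ι] {A : Matrix ι ι ℝ}

open scoped MatrixOrder in
lemma dotProduct_cfc_mulVec_le (hA : A.IsHermitian) (f : ℝ → ℝ) {c : ℝ}
    (hc : ∀ i, f (hA.eigenvalues i) ≤ c) (w : ι → ℝ) :
    w ⬝ᵥ cfc f A *ᵥ w ≤ c * (w ⬝ᵥ w) := by
  have hle : cfc f A ≤ algebraMap ℝ (Matrix ι ι ℝ) c := by
    refine cfc_le_algebraMap f c A ?_ (A.finite_real_spectrum.continuousOn f)
    rw [hA.spectrum_real_eq_range_eigenvalues]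
    exact Set.forall_mem_range.2 hc
  simpa [sub_mulVec, Algebra.algebraMap_eq_smul_one, smul_mulVec] using
    (Matrix.le_iff.1 hle).dotProduct_mulVec_nonneg w

lemma dotProduct_mulVec_le (hA : A.IsHermitian) {c : ℝ} (hc : ∀ i, hA.eigenvalues i ≤ c)
    (w : ι → ℝ) : w ⬝ᵥ A *ᵥ w ≤ c * (w ⬝ᵥ w) := by
  simpa only [cfc_id ℝ A hA.isSelfAdjoint] using dotProduct_cfc_mulVec_le hA id hc w

lemma cfc_add_inv (hA : A.PosDef) : cfc (fun x : ℝ => x + x⁻¹) A = A + A⁻¹ := by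
  have hcont (f : ℝ → ℝ) : ContinuousOn f (spectrum ℝ A) := A.finite_real_spectrum.continuousOn f
  rw [cfc_add A (fun x => x) (fun x => x⁻¹) (hcont _) (hcont _), cfc_id' ℝ A hA.1.isSelfAdjoint,
    nonsing_inv_eq_ringInverse, ← cfc_ringInverse_id (R := ℝ) A hA.isUnit
      hA.1.isSelfAdjoint]

lemma mulVec_inv_mulVec (hA : A.PosDef) (y : ι → ℝ) : A *ᵥ (A⁻¹ *ᵥ y) = y := by
  rw [mulVec_mulVec, mul_nonsing_inv _ (A.isUnit_iff_isUnit_det.1 hA.isUnit), one_mulVec]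

lemma inv_mulVec_mulVec (hA : A.PosDef) (y : ι → ℝ) : A⁻¹ *ᵥ (A *ᵥ y) = y := by
  rw [mulVec_mulVec, nonsing_inv_mul _ (A.isUnit_iff_isUnit_det.1 hA.isUnit), one_mulVec]

lemma dotProduct_mulVec_add_inv_mulVec_le (hA : A.PosDef) (x y : ι → ℝ) :
    (x + A⁻¹ *ᵥ y) ⬝ᵥ A *ᵥ (x + A⁻¹ *ᵥ y) ≤
      x ⬝ᵥ (A + A⁻¹) *ᵥ x + y ⬝ᵥ (A + A⁻¹) *ᵥ y := by
  have hnonneg : 0 ≤ (A *ᵥ y - x) ⬝ᵥ A⁻¹ *ᵥ (A *ᵥ y - x) := by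
    simpa using hA.inv.posSemidef.dotProduct_mulVec_nonneg (A *ᵥ y - x)
  have hcross : (A⁻¹ *ᵥ y) ⬝ᵥ A *ᵥ x = x ⬝ᵥ y := by
    rw [dotProduct_mulVec_comm hA.1, mulVec_inv_mulVec hA]
  have hcross' : (A *ᵥ y) ⬝ᵥ A⁻¹ *ᵥ x = x ⬝ᵥ y := by
    rw [dotProduct_mulVec_comm hA.inv.1, inv_mulVec_mulVec hA]
  simp only [mulVec_add, mulVec_sub, add_mulVec, dotProduct_add, dotProduct_sub, add_dotProduct,
    sub_dotProduct, mulVec_inv_mulVec hA, inv_mulVec_mulVec hA, hcross, hcross'] at hnonneg ⊢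
  linarith [dotProduct_comm (A *ᵥ y) y, dotProduct_comm (A⁻¹ *ᵥ y) y]

end QuadraticForm

section RealInequalities

lemma sq_sub_projIcc {a b : ℝ} (hab : a ≤ b) (x : ℝ) :
    (x - Set.projIcc a b hab x) ^ 2 = max (a - x) 0 ^ 2 + max (x - b) 0 ^ 2 := by
  rw [Set.coe_projIcc]
  grind

lemma gain_of_gradient_step {L z : ℝ} (hL : 0 < L) (hz : 0 ≤ z) (g : ℝ) :
    max g 0 ^ 2 / (2 * L) ≤
      g * (max (z + 1 / L * g) 0 - z) - L / 2 * (max (z + 1 / L * g) 0 - z) ^ 2 := by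
  rcases le_total 0 g with hg | hg
  · rw [max_eq_left hg, max_eq_left (by positivity)]
    apply le_of_eq
    field_simp
    ring
  · have hlower : g ≤ L * (max (z + 1 / L * g) 0 - z) := by
      calc g = L * (z + 1 / L * g - z) := by field_simp; ring
        _ ≤ _ := by gcongr; exact le_max_left _ _
    have hupper : max (z + 1 / L * g) 0 - z ≤ 0 := by
      have : 1 / L * g ≤ 0 := mul_nonpos_of_nonneg_of_nonpos (by positivity) hg
      exact sub_nonpos.2 (max_le (by linarith) hz)
    rw [max_eq_right hg, zero_pow two_ne_zero, zero_div]
    nlinarith [mul_nonneg_of_nonpos_of_nonpos (sub_nonpos.2 hlower) hupper]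

lemma gain_of_sign_step {L z β : ℝ} (hL : 0 ≤ L) (hz : 0 ≤ z) (hβ : 0 ≤ β) (g : ℝ) :
    β * max g 0 - L / 2 * β ^ 2 ≤
      g * (max (z + β * sgn g) 0 - z) - L / 2 * (max (z + β * sgn g) 0 - z) ^ 2 := by
  unfold sgn
  split_ifs with hg
  · rw [max_eq_left hg, max_eq_left (by linarith)]
    apply le_of_eq
    ring
  · push Not at hg
    have hlower : -β ≤ max (z + β * -1) 0 - z := by linarith [le_max_left (z + β * -1) 0]
    have hupper : max (z + β * -1) 0 - z ≤ 0 := sub_nonpos.2 (max_le (by linarith) hz)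
    have hprod : 0 ≤ g * (max (z + β * -1) 0 - z) :=
      mul_nonneg_of_nonpos_of_nonpos hg.le hupper
    have hsq : (max (z + β * -1) 0 - z) ^ 2 ≤ β ^ 2 :=
      sq_le_sq.2 (abs_le_abs_of_nonpos hupper hlower |>.trans (abs_neg β).le)
    rw [max_eq_right hg.le]
    nlinarith

/-- If `S < ε`, then `P ≥ ε ^ 2 - S ^ 2 ≥ ε * (ε - S) ≥ 2 * L * β * (ε - S)`. -/
lemma mul_le_div_add_mul_of_sq_le {ε L β P S : ℝ} (hL : 0 < L) (hβ : 0 ≤ β) (hP : 0 ≤ P)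
    (hS : 0 ≤ S) (hβε : 2 * L * β ≤ ε) (hPS : ε ^ 2 ≤ P + S ^ 2) :
    β * ε ≤ P / (2 * L) + β * S := by
  rcases le_total ε S with h | h
  · have : 0 ≤ P / (2 * L) := by positivity
    linarith [mul_le_mul_of_nonneg_left h hβ]
  · have : β * (ε - S) ≤ P / (2 * L) := by
      rw [le_div_iff₀ (by positivity)]
      nlinarith
    linarith

lemma exists_le_floor_of_add_le_succ {f : ℕ → ℝ} {P : ℕ → Prop} {B δ : ℝ} (hδ : 0 < δ)
    (h0 : 0 ≤ f 0) (hB : ∀ t, f t ≤ B) (hstep : ∀ t, ¬ P t → f t + δ ≤ f (t + 1)) :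
    ∃ T ≤ ⌊B / δ⌋₊, P T := by
  by_contra! hP
  have hgrowth : ∀ t ≤ ⌊B / δ⌋₊ + 1, t * δ ≤ f t := by
    intro t
    induction t with
    | zero => simpa using h0
    | succ t ih =>
      intro ht
      push_cast
      linarith [ih (by lia), hstep t (hP t (by lia))]
  have hlt : B < (⌊B / δ⌋₊ + 1) * δ := (div_lt_iff₀ hδ).1 (Nat.lt_floor_add_one _)
  have hle := (hgrowth _ le_rfl).trans (hB _)
  push_cast at hle
  linarith

lemma mul_mul_stepSize_le {n L ε : ℝ} (hn : 1 ≤ n) (hL : 0 < L) (hε : 0 ≤ ε) :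
    n * L * (ε / (4 * n ^ ((3 : ℝ) / 2) * L)) ≤ ε / 4 := by
  have hpow : n ≤ n ^ ((3 : ℝ) / 2) := Real.self_le_rpow_of_one_le hn (by norm_num)
  have hpow_pos : 0 < n ^ ((3 : ℝ) / 2) := by positivity
  calc n * L * (ε / (4 * n ^ ((3 : ℝ) / 2) * L))
      = ε / 4 * (n / n ^ ((3 : ℝ) / 2)) := by field_simp
    _ ≤ ε / 4 * 1 := by gcongr; exact (div_le_one hpow_pos).2 hpow
    _ = ε / 4 := mul_one _

lemma sq_div_le_stepSize_mul {n L ε : ℝ} (hn : 1 ≤ n) (hL : 0 < L) (hε : 0 ≤ ε) :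
    ε ^ 2 / (32 * n ^ 2 * L) ≤
      ε / (4 * n ^ ((3 : ℝ) / 2) * L) * (ε - n * L * (ε / (4 * n ^ ((3 : ℝ) / 2) * L))) := by
  have hpow : n ^ ((3 : ℝ) / 2) ≤ n ^ 2 := by
    rw [← Real.rpow_natCast n 2]
    exact Real.rpow_le_rpow_of_exponent_le hn (by norm_num)
  calc ε ^ 2 / (32 * n ^ 2 * L) ≤ ε ^ 2 / (8 * n ^ 2 * L) := by gcongr; norm_num
    _ = ε / (4 * n ^ 2 * L) * (ε / 2) := by field_simp; ring
    _ ≤ _ := by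
      gcongr
      linarith [mul_mul_stepSize_le hn hL hε]

end RealInequalities

section Dual

variable {N : ℕ} {A : Matrix (Fin N) (Fin N) ℝ} {d vmin vmax qmin qmax : Fin N → ℝ}

lemma mulVec_qOf (hA : A.PosDef) (z : Fin 4 → Fin N → ℝ) :
    A *ᵥ qOf A z = A *ᵥ (z 0 - z 1) + (z 2 - z 3) := by
  rw [qOf, mulVec_add, mulVec_inv_mulVec hA]

lemma qOf_add (z s : Fin 4 → Fin N → ℝ) : qOf A (z + s) = qOf A z + qOf A s := by
  simp only [qOf, Pi.add_apply, ← mulVec_add, add_sub_add_comm, add_add_add_comm]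

lemma dotProduct_mulVec_qOf_le (hA : A.PosDef) {L : ℝ} (hL0 : 0 ≤ L)
    (hL : ∀ i, 2 * (hA.1.eigenvalues i + (hA.1.eigenvalues i)⁻¹) ≤ L)
    (s : Fin 4 → Fin N → ℝ) :
    qOf A s ⬝ᵥ A *ᵥ qOf A s ≤ L * ∑ b, s b ⬝ᵥ s b := by
  have hform (w : Fin N → ℝ) : w ⬝ᵥ (A + A⁻¹) *ᵥ w ≤ L / 2 * (w ⬝ᵥ w) := by
    rw [← cfc_add_inv hA]
    exact dotProduct_cfc_mulVec_le hA.1 _ (fun i => by linarith [hL i]) w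
  have hsub (v w : Fin N → ℝ) : (v - w) ⬝ᵥ (v - w) ≤ 2 * (v ⬝ᵥ v + w ⬝ᵥ w) := by
    have hnonneg : 0 ≤ (v + w) ⬝ᵥ (v + w) := Finset.sum_nonneg fun i _ => mul_self_nonneg _
    simp only [add_dotProduct, sub_dotProduct, dotProduct_add, dotProduct_sub] at hnonneg ⊢
    linarith
  calc qOf A s ⬝ᵥ A *ᵥ qOf A s
      ≤ (s 0 - s 1) ⬝ᵥ (A + A⁻¹) *ᵥ (s 0 - s 1) + (s 2 - s 3) ⬝ᵥ (A + A⁻¹) *ᵥ (s 2 - s 3) :=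
        dotProduct_mulVec_add_inv_mulVec_le hA _ _
    _ ≤ L / 2 * ((s 0 - s 1) ⬝ᵥ (s 0 - s 1) + (s 2 - s 3) ⬝ᵥ (s 2 - s 3)) := by
        linarith [hform (s 0 - s 1), hform (s 2 - s 3)]
    _ ≤ L / 2 * (2 * ∑ b, s b ⬝ᵥ s b) := by
        gcongr
        simp only [Fin.sum_univ_four]
        linarith [hsub (s 0) (s 1), hsub (s 2) (s 3)]
    _ = L * ∑ b, s b ⬝ᵥ s b := by ring

/-- The Lagrangian of the primal problem, whose infimum over `q` is `dualFun`. -/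
def lagrangian (A : Matrix (Fin N) (Fin N) ℝ) (d vmin vmax qmin qmax : Fin N → ℝ)
    (z : Fin 4 → Fin N → ℝ) (q : Fin N → ℝ) : ℝ :=
  (1 / 2) * (q ⬝ᵥ A *ᵥ q) + z 0 ⬝ᵥ (vmin - volt A d q) + z 1 ⬝ᵥ (volt A d q - vmax)
    + z 2 ⬝ᵥ (qmin - q) + z 3 ⬝ᵥ (q - qmax)

local notation "ℒ" => lagrangian A d vmin vmax qmin qmax
local notation "𝒟" => dualFun A d vmin vmax qmin qmax
local notation "∇𝒟" => gradD A d vmin vmax qmin qmax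

lemma lagrangian_qOf_add (hA : A.PosDef) (z : Fin 4 → Fin N → ℝ) (h : Fin N → ℝ) :
    ℒ z (qOf A z + h) = ℒ z (qOf A z) + 1 / 2 * (h ⬝ᵥ A *ᵥ h) := by
  have hcross : h ⬝ᵥ A *ᵥ qOf A z = (z 0 - z 1) ⬝ᵥ A *ᵥ h + (z 2 - z 3) ⬝ᵥ h := by
    rw [mulVec_qOf hA, dotProduct_add, dotProduct_mulVec_comm hA.1,
      dotProduct_comm h (z 2 - z 3)]
  have hcross' := dotProduct_mulVec_comm hA.1 (qOf A z) h
  simp only [lagrangian, volt, mulVec_add, dotProduct_add, add_dotProduct, dotProduct_sub,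
    sub_dotProduct] at hcross ⊢
  linarith

lemma dualFun_eq_lagrangian_qOf (hA : A.PosDef) (z : Fin 4 → Fin N → ℝ) :
    𝒟 z = ℒ z (qOf A z) := by
  have hmin (q : Fin N → ℝ) : ℒ z (qOf A z) ≤ ℒ z q := by
    have hnonneg := hA.posSemidef.dotProduct_mulVec_nonneg (q - qOf A z)
    have hsq : ℒ z (qOf A z + (q - qOf A z)) = _ := lagrangian_qOf_add hA z _
    rw [add_sub_cancel] at hsq
    rw [star_trivial] at hnonneg
    linarith
  exact le_antisymm (ciInf_le ⟨_, Set.forall_mem_range.2 hmin⟩ _) (le_ciInf hmin)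

lemma lagrangian_eq_dualFun_add (hA : A.PosDef) (z : Fin 4 → Fin N → ℝ) (q : Fin N → ℝ) :
    ℒ z q = 𝒟 z + 1 / 2 * ((q - qOf A z) ⬝ᵥ A *ᵥ (q - qOf A z)) := by
  rw [dualFun_eq_lagrangian_qOf hA, ← lagrangian_qOf_add hA, add_sub_cancel]

lemma dualFun_zero (hA : A.PosDef) : 𝒟 0 = 0 := by
  simp [dualFun_eq_lagrangian_qOf hA, lagrangian, qOf]

lemma lagrangian_add_qOf (z s : Fin 4 → Fin N → ℝ) :
    ℒ (z + s) (qOf A z) = ℒ z (qOf A z) + ∑ b, ∇𝒟 z b ⬝ᵥ s b := by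
  simp only [lagrangian, gradD, Pi.add_apply, add_dotProduct, Fin.sum_univ_four, cons_val,
    dotProduct_comm (s _)]
  ring

/-- Evaluate the Lagrangian of the multipliers `z + s` at the minimizer for `z`. -/
lemma dualFun_add (hA : A.PosDef) (z s : Fin 4 → Fin N → ℝ) :
    𝒟 (z + s) = 𝒟 z + ∑ b, ∇𝒟 z b ⬝ᵥ s b - 1 / 2 * (qOf A s ⬝ᵥ A *ᵥ qOf A s) := by
  have hsq : ℒ (z + s) (qOf A z) = _ := lagrangian_eq_dualFun_add hA _ _
  rw [lagrangian_add_qOf, ← dualFun_eq_lagrangian_qOf hA, qOf_add, sub_add_cancel_left,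
    mulVec_neg, neg_dotProduct_neg] at hsq
  linarith

lemma le_dualFun_add (hA : A.PosDef) {L : ℝ} (hL0 : 0 ≤ L)
    (hL : ∀ i, 2 * (hA.1.eigenvalues i + (hA.1.eigenvalues i)⁻¹) ≤ L)
    (z s : Fin 4 → Fin N → ℝ) :
    𝒟 z + ∑ b, ∑ i, (∇𝒟 z b i * s b i - L / 2 * s b i ^ 2) ≤ 𝒟 (z + s) := by
  have hquad := dotProduct_mulVec_qOf_le hA hL0 hL s
  simp only [dualFun_add hA, Finset.sum_sub_distrib, ← Finset.mul_sum]
  simp only [dotProduct, ← sq] at hquad ⊢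
  linarith

/-- The set of points satisfying the constraints of the primal problem. -/
def feasibleSet (A : Matrix (Fin N) (Fin N) ℝ) (d vmin vmax qmin qmax : Fin N → ℝ) :
    Set (Fin N → ℝ) :=
  {q | q ∈ Set.Icc qmin qmax ∧ volt A d q ∈ Set.Icc vmin vmax}

lemma mem_feasibleSet {q : Fin N → ℝ} : q ∈ feasibleSet A d vmin vmax qmin qmax ↔
    (∀ i, qmin i ≤ q i ∧ q i ≤ qmax i) ∧ ∀ i, vmin i ≤ volt A d q i ∧ volt A d q i ≤ vmax i := by
  simp only [feasibleSet, Set.mem_ofPred_eq, Set.mem_Icc, Pi.le_def, forall_and]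

lemma dualFun_le_of_mem_feasibleSet (hA : A.PosDef) {p : Fin N → ℝ}
    (hp : p ∈ feasibleSet A d vmin vmax qmin qmax) {z : Fin 4 → Fin N → ℝ} (hz : 0 ≤ z) :
    𝒟 z ≤ 1 / 2 * (p ⬝ᵥ A *ᵥ p) := by
  obtain ⟨⟨hpmin, hpmax⟩, hvmin, hvmax⟩ := hp
  have hnonpos {v w : Fin N → ℝ} (hv : 0 ≤ v) (hw : w ≤ 0) : v ⬝ᵥ w ≤ 0 :=
    Finset.sum_nonpos fun i _ => mul_nonpos_of_nonneg_of_nonpos (hv i) (hw i)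
  have hsq := hA.posSemidef.dotProduct_mulVec_nonneg (p - qOf A z)
  have hdual : ℒ z p = _ := lagrangian_eq_dualFun_add hA z p
  rw [star_trivial] at hsq
  rw [lagrangian] at hdual
  linarith [hnonpos (hz 0) (sub_nonpos.2 hvmin), hnonpos (hz 1) (sub_nonpos.2 hvmax),
    hnonpos (hz 2) (sub_nonpos.2 hpmin), hnonpos (hz 3) (sub_nonpos.2 hpmax)]

/-- The amount by which `qOf A z` violates each constraint, in the block order of `gradD`. -/
def violation (A : Matrix (Fin N) (Fin N) ℝ) (d vmin vmax qmin qmax : Fin N → ℝ)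
    (z : Fin 4 → Fin N → ℝ) : Fin 4 → Fin N → ℝ :=
  fun b i => max (gradD A d vmin vmax qmin qmax z b i) 0

/-- One iteration of VC-LB: a projected gradient step in the voltage multipliers (blocks `0`, `1`)
and a projected sign step in the power multipliers (blocks `2`, `3`). -/
def vclbStep (A : Matrix (Fin N) (Fin N) ℝ) (d vmin vmax qmin qmax : Fin N → ℝ) (α β : ℝ)
    (z : Fin 4 → Fin N → ℝ) : Fin 4 → Fin N → ℝ :=
  fun b i => max (z b i + if (b : ℕ) < 2 then α * gradD A d vmin vmax qmin qmax z b i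
    else β * sgn (gradD A d vmin vmax qmin qmax z b i)) 0

local notation "𝓋" => violation A d vmin vmax qmin qmax
local notation "𝒯" => vclbStep A d vmin vmax qmin qmax

lemma violation_nonneg (z : Fin 4 → Fin N → ℝ) : 0 ≤ 𝓋 z :=
  fun _ _ => le_max_right _ _

lemma vclbStep_nonneg (α β : ℝ) (z : Fin 4 → Fin N → ℝ) : 0 ≤ 𝒯 α β z :=
  fun _ _ => le_max_right _ _

lemma fes_qOf_le (hv : vmin ≤ vmax) (hq : qmin ≤ qmax) (z : Fin 4 → Fin N → ℝ) :
    fes A d vmin vmax qmin qmax (qOf A z) ≤ enorm4 (𝓋 z) := by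
  refine csInf_le ⟨0, ?_⟩ ⟨fun i => Set.projIcc _ _ (hq i) (qOf A z i),
    fun i => Set.projIcc _ _ (hv i) (volt A d (qOf A z) i), fun i => (Set.projIcc _ _ _ _).2,
    fun i => (Set.projIcc _ _ _ _).2, ?_⟩
  · rintro r ⟨y1, y2, -, -, rfl⟩
    exact Real.sqrt_nonneg _
  · simp only [enorm4, violation, gradD, sq_sub_projIcc, Finset.sum_add_distrib,
      Fin.sum_univ_four, cons_val, Pi.sub_apply]
    ring_nf

lemma dualFun_add_le_dualFun_vclbStep (hA : A.PosDef) {L β : ℝ} (hL0 : 0 < L)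
    (hL : ∀ i, 2 * (hA.1.eigenvalues i + (hA.1.eigenvalues i)⁻¹) ≤ L) (hβ : 0 ≤ β)
    {z : Fin 4 → Fin N → ℝ} (hz : 0 ≤ z) :
    𝒟 z + ((∑ i, 𝓋 z 0 i ^ 2 + ∑ i, 𝓋 z 1 i ^ 2) / (2 * L)
        + β * (∑ i, 𝓋 z 2 i + ∑ i, 𝓋 z 3 i) - N * L * β ^ 2) ≤
      𝒟 (𝒯 (1 / L) β z) := by
  have hascent : 𝒟 z + _ ≤ 𝒟 (z + _) := le_dualFun_add hA hL0.le hL z (𝒯 (1 / L) β z - z)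
  rw [add_sub_cancel] at hascent
  refine le_trans ?_ hascent
  have hgradient (b : Fin 4) (hb : (b : ℕ) < 2) : (∑ i, 𝓋 z b i ^ 2) / (2 * L) ≤
      ∑ i, (∇𝒟 z b i * (𝒯 (1 / L) β z - z) b i
        - L / 2 * (𝒯 (1 / L) β z - z) b i ^ 2) := by
    rw [Finset.sum_div]
    refine Finset.sum_le_sum fun i _ => ?_
    simpa only [Pi.sub_apply, vclbStep, violation, if_pos hb] using
      gain_of_gradient_step hL0 (hz b i) _
  have hsign (b : Fin 4) (hb : ¬ (b : ℕ) < 2) :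
      β * ∑ i, 𝓋 z b i - N * (L / 2 * β ^ 2) ≤
      ∑ i, (∇𝒟 z b i * (𝒯 (1 / L) β z - z) b i
        - L / 2 * (𝒯 (1 / L) β z - z) b i ^ 2) := by
    calc β * ∑ i, 𝓋 z b i - N * (L / 2 * β ^ 2)
        = ∑ i, (β * 𝓋 z b i - L / 2 * β ^ 2) := by simp [Finset.mul_sum]
      _ ≤ _ := Finset.sum_le_sum fun i _ => by
        simpa only [Pi.sub_apply, vclbStep, violation, if_neg hb] using
          gain_of_sign_step hL0.le (hz b i) hβ _
  rw [Fin.sum_univ_four, add_div]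
  linarith [hgradient 0 (by decide), hgradient 1 (by decide), hsign 2 (by decide),
    hsign 3 (by decide)]

lemma dualFun_add_le_dualFun_vclbStep_of_le_enorm4 (hA : A.PosDef) {L β ε : ℝ} (hL0 : 0 < L)
    (hL : ∀ i, 2 * (hA.1.eigenvalues i + (hA.1.eigenvalues i)⁻¹) ≤ L) (hβ : 0 ≤ β)
    (hβε : 2 * L * β ≤ ε) {z : Fin 4 → Fin N → ℝ} (hz : 0 ≤ z) (hε : ε ≤ enorm4 (𝓋 z)) :
    𝒟 z + β * (ε - N * L * β) ≤ 𝒟 (𝒯 (1 / L) β z) := by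
  have hsum_nonneg (b : Fin 4) : 0 ≤ ∑ i, 𝓋 z b i :=
    Finset.sum_nonneg fun i _ => violation_nonneg z b i
  have hsum_sq (b : Fin 4) : ∑ i, 𝓋 z b i ^ 2 ≤ (∑ i, 𝓋 z b i) ^ 2 :=
    Finset.sum_sq_le_sq_sum_of_nonneg fun i _ => violation_nonneg z b i
  have hε0 : 0 ≤ ε := le_trans (by positivity) hβε
  have hviolation : ε ^ 2 ≤ (∑ i, 𝓋 z 0 i ^ 2 + ∑ i, 𝓋 z 1 i ^ 2)
      + (∑ i, 𝓋 z 2 i + ∑ i, 𝓋 z 3 i) ^ 2 := by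
    rw [enorm4, Real.le_sqrt hε0 (by positivity), Fin.sum_univ_four] at hε
    linarith [hsum_sq 2, hsum_sq 3, mul_nonneg (hsum_nonneg 2) (hsum_nonneg 3)]
  have hgain := mul_le_div_add_mul_of_sq_le hL0 hβ (by positivity)
    (add_nonneg (hsum_nonneg 2) (hsum_nonneg 3)) hβε hviolation
  linarith [dualFun_add_le_dualFun_vclbStep (d := d) (vmin := vmin) (vmax := vmax)
    (qmin := qmin) (qmax := qmax) hA hL0 hL hβ hz]

theorem exists_le_floor_fes_le (hA : A.PosDef) {L β ε : ℝ} (hL0 : 0 < L)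
    (hL : ∀ i, 2 * (hA.1.eigenvalues i + (hA.1.eigenvalues i)⁻¹) ≤ L) (hβ : 0 < β)
    (hβε : 2 * L * β ≤ ε) (hNβε : N * L * β < ε) {p : Fin N → ℝ}
    (hp : p ∈ feasibleSet A d vmin vmax qmin qmax) {z : ℕ → Fin 4 → Fin N → ℝ} (hz0 : z 0 = 0)
    (hstep : ∀ t, z (t + 1) = 𝒯 (1 / L) β (z t)) :
    ∃ T ≤ ⌊1 / 2 * (p ⬝ᵥ A *ᵥ p) / (β * (ε - N * L * β))⌋₊,
      fes A d vmin vmax qmin qmax (qOf A (z T)) ≤ ε := by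
  have hz (t : ℕ) : 0 ≤ z t := by
    cases t with
    | zero => exact hz0.ge
    | succ t => exact hstep t ▸ vclbStep_nonneg _ _ _
  refine exists_le_floor_of_add_le_succ (f := fun t => 𝒟 (z t)) (mul_pos hβ (sub_pos.2 hNβε))
    (by rw [hz0, dualFun_zero hA]) (fun t => dualFun_le_of_mem_feasibleSet hA hp (hz t))
    fun t ht => ?_
  rw [hstep]
  refine dualFun_add_le_dualFun_vclbStep_of_le_enorm4 hA hL0 hL hβ.le hβε (hz t) ?_
  exact (not_le.1 ht).le.trans
    (fes_qOf_le (hp.2.1.trans hp.2.2) (hp.1.1.trans hp.1.2) (z t))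

end Dual

end VoltageControl

open VoltageControl in
theorem stmt_10_general (N : ℕ) (hN : 0 < N) (A : Matrix (Fin N) (Fin N) ℝ) (hA : A.PosDef)
    (d vmin vmax qmin qmax : Fin N → ℝ)
    (hfeas : (feasibleSet A d vmin vmax qmin qmax).Nonempty)
    (L : ℝ) (hL : ∀ i, 2 * (hA.1.eigenvalues i + (hA.1.eigenvalues i)⁻¹) ≤ L)
    (Q : ℝ) (hQmin : ∀ i, qmin i ^ 2 ≤ Q) (hQmax : ∀ i, qmax i ^ 2 ≤ Q)
    (lmax : ℝ) (hlmax : ∀ i, hA.1.eigenvalues i ≤ lmax)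
    (ε : ℝ) (hε : 0 < ε)
    (α β : ℝ) (hα : α = 1 / L) (hβ : β = ε / (4 * (N : ℝ) ^ ((3 : ℝ) / 2) * L))
    (ziter : ℕ → Fin 4 → Fin N → ℝ) (hz0 : ziter 0 = 0)
    (hstep : ∀ t, ziter (t + 1) = vclbStep A d vmin vmax qmin qmax α β (ziter t)) :
    ∃ T : ℕ,
      T ≤ ⌈16 * (N : ℝ) ^ 3 * L * Q * lmax / ε ^ 2⌉₊ ∧
      fes A d vmin vmax qmin qmax (qOf A (ziter T)) ≤ ε := by
  subst hα
  obtain ⟨p, hp⟩ := hfeas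
  have hN1 : (1 : ℝ) ≤ N := Nat.one_le_cast.2 hN
  have hlam : 0 < hA.1.eigenvalues ⟨0, hN⟩ := hA.eigenvalues_pos _
  have hL0 : 0 < L := lt_of_lt_of_le (by positivity) (hL ⟨0, hN⟩)
  have hlmax0 : 0 < lmax := hlam.trans_le (hlmax _)
  have hQ0 : 0 ≤ Q := (sq_nonneg _).trans (hQmin ⟨0, hN⟩)
  have hβ0 : 0 < β := by rw [hβ]; positivity
  have hNβ : N * L * β ≤ ε / 4 := hβ ▸ mul_mul_stepSize_le hN1 hL0 hε.le
  have hβε : 2 * L * β ≤ ε := by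
    linarith [le_mul_of_one_le_left (mul_pos hL0 hβ0).le hN1]
  have hgain : ε ^ 2 / (32 * N ^ 2 * L) ≤ β * (ε - N * L * β) :=
    hβ ▸ sq_div_le_stepSize_mul hN1 hL0 hε.le
  have hobjective : p ⬝ᵥ A *ᵥ p ≤ lmax * (N * Q) := by
    refine (dotProduct_mulVec_le hA.1 hlmax p).trans ?_
    gcongr
    simpa using dotProduct_self_le_of_mem_Icc hp.1 hQmin hQmax
  obtain ⟨T, hT, hfes⟩ := exists_le_floor_fes_le hA hL0 hL hβ0 hβε (by linarith) hp hz0 hstep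
  refine ⟨T, hT.trans ((Nat.floor_mono ?_).trans (Nat.floor_le_ceil _)), hfes⟩
  calc 1 / 2 * (p ⬝ᵥ A *ᵥ p) / (β * (ε - N * L * β))
      ≤ 1 / 2 * (lmax * (N * Q)) / (ε ^ 2 / (32 * N ^ 2 * L)) := by gcongr
    _ = 16 * N ^ 3 * L * Q * lmax / ε ^ 2 := by field_simp; ring

open VoltageControl in
/-- Theorem 1: if the primal problem is feasible, ε ∈ (0,1], and the step sizes are
α = 1/L and β = ε/(4N^{3/2}L), then the VC-LB iterates reach fes(q(z(T))) ≤ ε for some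
T ≤ ⌈16N³LQλ_max(A)/ε²⌉, where Q = max{(q^min_i)², (q^max_i)² : i} and λ_max(A) is the
largest eigenvalue of A. -/
theorem stmt_10 (N : ℕ) (hN : 0 < N) (A : Matrix (Fin N) (Fin N) ℝ) (hA : A.PosDef)
    (d vmin vmax qmin qmax : Fin N → ℝ)
    (hv : ∀ i, vmin i ≤ vmax i) (hq : ∀ i, qmin i ≤ qmax i)
    (hfeas : ∃ q : Fin N → ℝ, (∀ i, qmin i ≤ q i ∧ q i ≤ qmax i) ∧
      ∀ i, vmin i ≤ volt A d q i ∧ volt A d q i ≤ vmax i)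
    (L : ℝ)
    (hL : IsGreatest
      (Set.range fun i : Fin N => 2 * (hA.1.eigenvalues i + (hA.1.eigenvalues i)⁻¹)) L)
    (Q : ℝ)
    (hQ : IsGreatest
      ((Set.range fun i : Fin N => qmin i ^ 2) ∪ Set.range fun i : Fin N => qmax i ^ 2) Q)
    (lmax : ℝ) (hlmax : IsGreatest (Set.range hA.1.eigenvalues) lmax)
    (ε : ℝ) (hε0 : 0 < ε) (hε1 : ε ≤ 1)
    (α β : ℝ) (hα : α = 1 / L) (hβ : β = ε / (4 * (N : ℝ) ^ ((3 : ℝ) / 2) * L))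
    (ziter : ℕ → Fin 4 → Fin N → ℝ) (hz0 : ziter 0 = 0)
    (hstep : ∀ t b i, ziter (t + 1) b i =
      max (ziter t b i + (if (b : ℕ) < 2 then α * gradD A d vmin vmax qmin qmax (ziter t) b i
        else β * sgn (gradD A d vmin vmax qmin qmax (ziter t) b i))) 0) :
    ∃ T : ℕ,
      T ≤ ⌈16 * (N : ℝ) ^ 3 * L * Q * lmax / ε ^ 2⌉₊ ∧
      fes A d vmin vmax qmin qmax (qOf A (ziter T)) ≤ ε := by
  exact stmt_10_general N hN A hA d vmin vmax qmin qmax (hfeas.imp fun _ => mem_feasibleSet.2)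
    L (fun i => hL.2 ⟨i, rfl⟩) Q (fun i => hQ.2 (.inl ⟨i, rfl⟩)) (fun i => hQ.2 (.inr ⟨i, rfl⟩))
    lmax (fun i => hlmax.2 ⟨i, rfl⟩) ε hε0 α β hα hβ ziter hz0 fun t => funext₂ (hstep t)

end
end
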